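/- arXiv:math/0611488 — 2 statements merged into one kernel-verified Lean document; each statement's English description precedes it below -/
import Mathlib

section
/- Let J = (f_1,...,f_n) ⊆ S = k[x_1,...,x_n] be generated by a homogeneous regular sequence with deg(f_i) = a_i, let I be a homogeneous ideal containing J, and let s = Σ_{i=1}^n (a_i − 1). Then H(S/J, t) = H(S/I, t) + H(S/(J : I), s − t) for all 0 ≤ t ≤ s. -/
open MvPolynomial

/-- Hilbert function of a homogeneous ideal `I`: the `K`-dimension of its degree-`d` piece. -/
noncomputable def hilb {K : Type} [Field K] {n : ℕ}
    (I : Ideal (MvPolynomial (Fin n) K)) (d : ℕ) : ℕ :=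
  Module.finrank K ↥(Submodule.restrictScalars K I ⊓ homogeneousSubmodule (Fin n) K d)

/-- Hilbert function of the quotient `S/I` in degree `d`. -/
noncomputable def hilbQ {K : Type} [Field K] {n : ℕ}
    (I : Ideal (MvPolynomial (Fin n) K)) (d : ℕ) : ℕ :=
  Module.finrank K
    ((homogeneousSubmodule (Fin n) K d).map (Ideal.Quotient.mkₐ K I).toLinearMap)

/-- A homogeneous ideal: closed under taking homogeneous components. -/
def IsHomog {K : Type} [Field K] {n : ℕ} (I : Ideal (MvPolynomial (Fin n) K)) : Prop :=
  ∀ f ∈ I, ∀ d : ℕ, homogeneousComponent d f ∈ I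

/-- `f 0, ..., f (r-1)` is a regular sequence: it generates a proper ideal and each `f i`
is a nonzerodivisor modulo the ideal generated by the previous elements. -/
def IsRegSeq {K : Type} [Field K] {n r : ℕ} (f : Fin r → MvPolynomial (Fin n) K) : Prop :=
  Ideal.span (Set.range f) ≠ ⊤ ∧
  ∀ i : Fin r, ∀ g : MvPolynomial (Fin n) K,
    f i * g ∈ Ideal.span (f '' {j : Fin r | j < i}) →
      g ∈ Ideal.span (f '' {j : Fin r | j < i})

/-- A monomial ideal: generated by monomials. -/
def IsMonomialIdeal {K : Type} [Field K] {n : ℕ} (I : Ideal (MvPolynomial (Fin n) K)) : Prop :=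
  ∃ T : Set (Fin n →₀ ℕ), I = Ideal.span ((fun u => monomial u (1 : K)) '' T)

/-- `x^v` is lexicographically greater than `x^u` (for `x_0 > x_1 > ... > x_{n-1}`). -/
def lexGT {n : ℕ} (v u : Fin n →₀ ℕ) : Prop :=
  ∃ i : Fin n, u i < v i ∧ ∀ j : Fin n, j < i → v j = u j

/-!
By Rees' lemma an `M`-regular sequence `rs` that annihilates `N` shifts `Ext`:
`Ext N M rs.length ≃ Hom(N, M/(rs)M)`. For `N = S/𝔪` and `M = S` both `f` and the sequence of the
variables compute `Extⁿ(S/𝔪, S)` in this way, so `Hom(S/𝔪, S/J) ≃ Hom(S/𝔪, S/𝔪)`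
and the socle of `S/J` is a line.
The Hilbert series `∏ (1 + z + ⋯ + z ^ (a i - 1))` of `S/J` shows that this line lies in degree
`s`. A nonzero class of degree less than `s` is then not killed by every variable, so
multiplication into degree `s`, followed by a functional vanishing exactly on `J` there, is a
perfect pairing between the pieces of `S/J` of degrees `t` and `s - t`. Under it `(J : I)` is the
annihilator of `I`, and the formula is a count of dimensions.
-/

section Rees

open CategoryTheory CategoryTheory.Abelian RingTheory.Sequence

universe u v

section Ext

variable {R : Type u} [CommRing R] [Small.{v} R] {M N : ModuleCat.{v} R} {a : R}

theorem extClass_postcomp_surjective (ha : IsSMulRegular M a) (haN : a ∈ Module.annihilator R N)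
    (n : ℕ) :
    Function.Surjective
      (ha.smulShortComplex_shortExact.extClass.postcompOfLinear R N (rfl : n + 1 = n + 1)) := by
  intro x
  have hx : x.comp (Ext.mk₀ (M.smulShortComplex a).f) (add_zero _) = 0 :=
    congrArg (fun g => g.hom x)
      (Ext.postcomp_smul_id_eq_zero_of_mem_annihilator (M := M) haN (n + 1))
  exact Ext.covariant_sequence_exact₁ N ha.smulShortComplex_shortExact x hx rfl

theorem extClass_postcomp_injective (ha : IsSMulRegular M a) (n : ℕ) [Subsingleton (Ext N M n)] :
    Function.Injective
      (ha.smulShortComplex_shortExact.extClass.postcompOfLinear R N (rfl : n + 1 = n + 1)) := by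
  rw [injective_iff_map_eq_zero]
  intro x hx
  obtain ⟨y, rfl⟩ := Ext.covariant_sequence_exact₃ N ha.smulShortComplex_shortExact x rfl hx
  have hy : y = 0 := Subsingleton.elim (α := Ext N M n) _ _
  rw [hy, Ext.zero_comp]

theorem subsingleton_ext_of_isWeaklyRegular {rs : List R} (hreg : IsWeaklyRegular M rs)
    (hann : ∀ r ∈ rs, r ∈ Module.annihilator R N) {i : ℕ} (hi : i < rs.length) :
    Subsingleton (Ext N M i) := by
  induction rs generalizing M i with
  | nil => simp at hi
  | cons a rs ih =>
    rw [isWeaklyRegular_cons_iff] at hreg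
    obtain ⟨ha, hrs⟩ := hreg
    have haN := hann a List.mem_cons_self
    cases i with
    | zero =>
      have : Subsingleton (N →ₗ[R] M) := ha.linearMap_subsingleton_of_mem_annihilator haN
      exact (Ext.addEquiv₀.trans ModuleCat.homAddEquiv).subsingleton
    | succ i =>
      let C := ModuleCat.of R (QuotSMulTop a M)
      have : Subsingleton (Ext N C i) :=
        ih hrs (fun r hr => hann r (List.mem_cons_of_mem _ hr)) (by simpa using hi)
      exact (extClass_postcomp_surjective ha haN i).subsingleton (α := Ext N C i)

theorem nonempty_ext_linearEquiv_of_isWeaklyRegular {rs : List R} (hreg : IsWeaklyRegular M rs)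
    (hann : ∀ r ∈ rs, r ∈ Module.annihilator R N) :
    Nonempty (Ext N M rs.length ≃ₗ[R]
      (N →ₗ[R] M ⧸ (Ideal.ofList rs • ⊤ : Submodule R M))) := by
  induction rs generalizing M with
  | nil =>
    have h : (Ideal.ofList ([] : List R) • ⊤ : Submodule R M) = ⊥ := by simp
    exact ⟨Ext.linearEquiv₀.trans (ModuleCat.homLinearEquiv.trans
      (Submodule.quotEquivOfEqBot _ h).symm.congrRight)⟩
  | cons a rs ih =>
    have : Subsingleton (Ext N M rs.length) :=
      subsingleton_ext_of_isWeaklyRegular hreg hann (by simp)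
    rw [isWeaklyRegular_cons_iff] at hreg
    obtain ⟨ha, hrs⟩ := hreg
    obtain ⟨e⟩ := ih (M := ModuleCat.of R (QuotSMulTop a M)) hrs
      (fun r hr => hann r (List.mem_cons_of_mem _ hr))
    let δ := LinearEquiv.ofBijective _ ⟨extClass_postcomp_injective (N := N) ha rs.length,
      extClass_postcomp_surjective ha (hann a List.mem_cons_self) rs.length⟩
    exact ⟨δ.symm.trans (e.trans
      (Submodule.quotOfListConsSMulTopEquivQuotSMulTopInner M a rs).symm.congrRight)⟩

end Ext

section Colon

variable {R : Type u} [CommRing R]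

theorem mem_colon_iff_exists_linearMap {J m : Ideal R} {u : R} :
    u ∈ J.colon (m : Set R) ↔
      ∃ ψ : (R ⧸ m) →ₗ[R] R ⧸ J, ψ (Ideal.Quotient.mk m 1) = Ideal.Quotient.mk J u := by
  simp only [Submodule.mem_colon, SetLike.mem_coe, smul_eq_mul]
  constructor
  · intro hu
    refine ⟨m.liftQ (LinearMap.toSpanSingleton R _ (Ideal.Quotient.mk J u)) fun x hx => ?_, ?_⟩
    · exact Ideal.Quotient.eq_zero_iff_mem.mpr ((mul_comm u x) ▸ hu x hx : x * u ∈ J)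
    · exact (Submodule.liftQ_apply _ _ _).trans (one_smul R _)
  · rintro ⟨ψ, hψ⟩ x hx
    have hx1 : x • Ideal.Quotient.mk m 1 = 0 :=
      Ideal.Quotient.eq_zero_iff_mem.mpr (m.mul_mem_right _ hx)
    have hxu : x • Ideal.Quotient.mk J u = 0 := by rw [← hψ, ← map_smul, hx1, map_zero]
    exact mul_comm x u ▸ Ideal.Quotient.eq_zero_iff_mem.mp hxu

theorem nonempty_linearEquiv_quotient_ofList {rs xs : List R}
    (hrs : IsWeaklyRegular R rs) (hxs : IsWeaklyRegular R xs) (hlen : rs.length = xs.length)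
    (hle : Ideal.ofList rs ≤ Ideal.ofList xs) :
    Nonempty (((R ⧸ Ideal.ofList xs) →ₗ[R] R ⧸ Ideal.ofList rs) ≃ₗ[R]
      ((R ⧸ Ideal.ofList xs) →ₗ[R] R ⧸ Ideal.ofList xs)) := by
  let N := ModuleCat.of R (R ⧸ Ideal.ofList xs)
  have hann : Module.annihilator R N = Ideal.ofList xs := Ideal.annihilator_quotient
  have hom_equiv (ys : List R) (hys : IsWeaklyRegular R ys)
      (hmem : Ideal.ofList ys ≤ Ideal.ofList xs) :
      Nonempty (Ext N (ModuleCat.of R R) ys.length ≃ₗ[R] (N →ₗ[R] R ⧸ Ideal.ofList ys)) := by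
    obtain ⟨e⟩ := nonempty_ext_linearEquiv_of_isWeaklyRegular (M := ModuleCat.of R R) hys
      fun r hr => hann ▸ hmem (Ideal.subset_span hr)
    exact ⟨e.trans (Submodule.quotEquivOfEq _ _ (Ideal.mul_top _)).congrRight⟩
  obtain ⟨e⟩ := hom_equiv rs hrs hle
  obtain ⟨e'⟩ := hom_equiv xs hxs le_rfl
  rw [hlen] at e
  exact ⟨e.symm.trans e'⟩

theorem exists_colon_ofList_eq_sup_span_singleton {rs xs : List R}
    (hrs : IsWeaklyRegular R rs) (hxs : IsWeaklyRegular R xs) (hlen : rs.length = xs.length)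
    (hle : Ideal.ofList rs ≤ Ideal.ofList xs) :
    ∃ w, (Ideal.ofList rs).colon (Ideal.ofList xs : Set R) = Ideal.ofList rs ⊔ Ideal.span {w} := by
  obtain ⟨e⟩ := nonempty_linearEquiv_quotient_ofList hrs hxs hlen hle
  set J := Ideal.ofList rs
  set m := Ideal.ofList xs
  obtain ⟨w, hw⟩ := Ideal.Quotient.mk_surjective (e.symm .id (Ideal.Quotient.mk m 1))
  refine ⟨w, le_antisymm (fun u hu => ?_) (sup_le Ideal.le_colon ?_)⟩
  · obtain ⟨ψ, hψ⟩ := mem_colon_iff_exists_linearMap.mp hu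
    obtain ⟨r, hr⟩ := Ideal.Quotient.mk_surjective (e ψ (Ideal.Quotient.mk m 1))
    have heψ : e ψ = r • .id := by
      ext
      exact hr.symm.trans (congrArg (Ideal.Quotient.mk m) (mul_one r)).symm
    have hur : Ideal.Quotient.mk J u = Ideal.Quotient.mk J (r * w) := by
      rw [← hψ, ← e.symm_apply_apply ψ, heψ, map_smul, LinearMap.smul_apply, ← hw]
      rfl
    rw [← sub_add_cancel u (r * w)]
    exact add_mem (Ideal.mem_sup_left (Ideal.Quotient.eq.mp hur))
      (Ideal.mem_sup_right (Ideal.mul_mem_left _ _ (Ideal.mem_span_singleton_self w)))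
  · exact (Ideal.span_singleton_le_iff_mem _).mpr
      (mem_colon_iff_exists_linearMap.mpr ⟨e.symm .id, hw.symm⟩)

end Colon

end Rees

section RegularSequence

open RingTheory.Sequence

theorem ideal_ofList_ofFn {R : Type*} [CommSemiring R] {r : ℕ} (f : Fin r → R) :
    Ideal.ofList (List.ofFn f) = Ideal.span (Set.range f) :=
  congrArg Ideal.span (by ext; simp [List.mem_ofFn])

theorem isWeaklyRegular_ofFn_iff {R : Type*} [CommRing R] {r : ℕ} (f : Fin r → R) :
    IsWeaklyRegular R (List.ofFn f) ↔ ∀ (i : Fin r) (g : R),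
      f i * g ∈ Ideal.span (f '' {j | j < i}) → g ∈ Ideal.span (f '' {j | j < i}) := by
  have htake (i : Fin r) :
      (Ideal.ofList ((List.ofFn f).take i) • ⊤ : Ideal R) = Ideal.span (f '' {j | j < i}) := by
    rw [smul_eq_mul, Ideal.mul_top, Ideal.ofList]
    congr 1
    ext x
    simp only [Set.mem_ofPred_eq, List.mem_take_iff_getElem, List.getElem_ofFn, Set.mem_image,
      List.length_ofFn, lt_min_iff]
    exact ⟨fun ⟨j, hj, hx⟩ => ⟨⟨j, hj.2⟩, hj.1, hx⟩, fun ⟨j, hj, hx⟩ => ⟨j, ⟨hj, j.2⟩, hx⟩⟩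
  simp only [isWeaklyRegular_iff, List.length_ofFn, List.getElem_ofFn, Fin.forall_iff]
  refine forall₂_congr fun i hi => ?_
  rw [isSMulRegular_quotient_iff_mem_of_smul_mem, htake ⟨i, hi⟩]
  rfl

theorem isWeaklyRegular_ofFn_X {R : Type*} [CommRing R] (n : ℕ) :
    IsWeaklyRegular (MvPolynomial (Fin n) R) (List.ofFn (X : Fin n → MvPolynomial (Fin n) R)) := by
  rw [isWeaklyRegular_ofFn_iff]
  intro i g h
  rw [mem_ideal_span_X_image] at h ⊢
  intro m hm
  obtain ⟨j, hji, hj⟩ := h (Finsupp.single i 1 + m) (by simpa [coeff_X_mul] using hm)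
  have hij : i ≠ j := hji.ne'
  exact ⟨j, hji, by simpa [Finsupp.single_apply, hij] using hj⟩

end RegularSequence

section LinearAlgebra

open Module

variable {K V V' : Type*} [AddCommGroup V] [AddCommGroup V']

theorem finrank_map_add_finrank_inf_ker [DivisionRing K] [Module K V] [Module K V']
    (φ : V →ₗ[K] V') (U : Submodule K V) [FiniteDimensional K U] :
    finrank K (U.map φ) + finrank K ↥(U ⊓ LinearMap.ker φ) = finrank K U := by
  rw [← LinearMap.finrank_range_add_finrank_ker (φ.domRestrict U), LinearMap.range_domRestrict,
    LinearMap.ker_domRestrict, ← Submodule.map_comap_subtype, Submodule.finrank_map_subtype_eq]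

theorem finrank_add_finrank_inf_dualCoannihilator [Field K] [Module K V] [Module K V']
    (B : V →ₗ[K] V' →ₗ[K] K) (U : Submodule K V) (W : Submodule K V')
    [FiniteDimensional K U] [FiniteDimensional K W] :
    finrank K U + finrank K ↥(W ⊓ (U.map B).dualCoannihilator) =
      finrank K W + finrank K ↥(U ⊓ (W.map B.flip).dualCoannihilator) := by
  let β : V →ₗ[K] Dual K W := B.compl₂ W.subtype
  have hker : LinearMap.ker β = (W.map B.flip).dualCoannihilator := by
    ext g
    have hg : g ∈ LinearMap.ker β ↔ ∀ h ∈ W, B g h = 0 := LinearMap.ext_iff.trans Subtype.forall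
    simp [hg]
  have hcoann : (U.map β).dualCoannihilator =
      (U.map B).dualCoannihilator.comap W.subtype := by
    ext
    simp [β]
  have hrank := finrank_map_add_finrank_inf_ker β U
  have hdual := Subspace.finrank_add_finrank_dualCoannihilator_eq (U.map β)
  rw [hker] at hrank
  rw [hcoann, ← Submodule.finrank_map_subtype_eq, Submodule.map_comap_subtype] at hdual
  omega

end LinearAlgebra

section Polynomial

variable {σ R : Type*} [CommSemiring R]

theorem mem_idealOfVars_iff {p : MvPolynomial σ R} : p ∈ idealOfVars σ R ↔ coeff 0 p = 0 := by
  rw [← pow_one (idealOfVars σ R), mem_pow_idealOfVars_iff']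
  refine ⟨fun h => h 0 (by simp), fun h x hx => ?_⟩
  rwa [(Finsupp.degree_eq_zero_iff x).mp (Nat.lt_one_iff.mp hx)]

theorem mem_idealOfVars_of_isHomogeneous {p : MvPolynomial σ R} {d : ℕ} (hp : p.IsHomogeneous d)
    (hd : d ≠ 0) : p ∈ idealOfVars σ R :=
  mem_idealOfVars_iff.mpr (hp.coeff_eq_zero (by simpa using hd.symm))

theorem mem_colon_idealOfVars_iff {J : Ideal (MvPolynomial σ R)} {p : MvPolynomial σ R} :
    p ∈ J.colon (idealOfVars σ R : Set _) ↔ ∀ i, X i * p ∈ J := by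
  simp [idealOfVars, Submodule.mem_colon, mul_comm p]

theorem eq_C_of_isHomogeneous_zero {p : MvPolynomial σ R} (hp : p.IsHomogeneous 0) :
    p = C (coeff 0 p) := by
  rw [← homogeneousComponent_zero, homogeneousComponent_eq_self hp]

attribute [local instance] MvPolynomial.gradedAlgebra

theorem homogeneousComponent_add_mul {f : MvPolynomial σ R} {a : ℕ} (hf : f.IsHomogeneous a)
    (g : MvPolynomial σ R) (t : ℕ) :
    homogeneousComponent (t + a) (f * g) = f * homogeneousComponent t g := by
  have h := DirectSum.coe_decompose_mul_of_left_mem_of_le (𝒜 := homogeneousSubmodule σ R)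
    (b := g) hf (Nat.le_add_left a t)
  rw [Nat.add_sub_cancel] at h
  rw [← decomposition.decompose'_apply, ← decomposition.decompose'_apply]
  exact h

theorem homogeneousComponent_mul_of_lt {f : MvPolynomial σ R} {a t : ℕ} (hf : f.IsHomogeneous a)
    (g : MvPolynomial σ R) (ht : t < a) : homogeneousComponent t (f * g) = 0 := by
  rw [← decomposition.decompose'_apply]
  exact DirectSum.coe_decompose_mul_of_left_mem_of_not_le (𝒜 := homogeneousSubmodule σ R)
    (b := g) hf ht.not_ge

theorem exists_sub_C_mul_mem {R : Type*} [CommRing R] {J : Ideal (MvPolynomial σ R)}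
    {w u : MvPolynomial σ R} (hw : w ∈ J.colon (idealOfVars σ R : Set _))
    (hu : u ∈ J ⊔ Ideal.span {w}) : ∃ c, u - C c * w ∈ J := by
  rw [sup_comm, Ideal.mem_span_singleton_sup] at hu
  obtain ⟨r, b, hb, rfl⟩ := hu
  have hr : r - C (coeff 0 r) ∈ idealOfVars σ R := mem_idealOfVars_iff.mpr (by simp)
  refine ⟨coeff 0 r, ?_⟩
  have hrw : (r - C (coeff 0 r)) * w ∈ J := mul_comm w _ ▸ Submodule.mem_colon.mp hw _ hr
  convert add_mem hrw hb using 1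
  ring

theorem colon_idealOfVars_eq_sup_span_singleton {K : Type*} [Field K]
    {J : Ideal (MvPolynomial σ K)} {v w : MvPolynomial σ K}
    (hv : J.colon (idealOfVars σ K : Set _) = J ⊔ Ideal.span {v})
    (hw : w ∈ J.colon (idealOfVars σ K : Set _)) (hwJ : w ∉ J) :
    J.colon (idealOfVars σ K : Set _) = J ⊔ Ideal.span {w} := by
  have hvcolon : v ∈ J.colon (idealOfVars σ K : Set _) :=
    hv ▸ Ideal.mem_sup_right (Ideal.mem_span_singleton_self v)
  obtain ⟨c, hc⟩ := exists_sub_C_mul_mem hvcolon (hv ▸ hw)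
  have hc0 : c ≠ 0 := by
    rintro rfl
    exact hwJ (by simpa using hc)
  have hcw : C c⁻¹ * w - v ∈ J := by
    have h := J.mul_mem_left (C c⁻¹) hc
    rwa [mul_sub, ← mul_assoc, ← C_mul, inv_mul_cancel₀ hc0, C_1, one_mul] at h
  refine le_antisymm (hv.trans_le (sup_le le_sup_left ?_)) (sup_le Ideal.le_colon ?_)
  · rw [Ideal.span_singleton_le_iff_mem, ← sub_sub_cancel (C c⁻¹ * w) v]
    exact sub_mem (Ideal.mem_sup_right (Ideal.mem_span_singleton.mpr (dvd_mul_left _ _)))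
      (Ideal.mem_sup_left hcw)
  · rwa [Ideal.span_singleton_le_iff_mem]

end Polynomial

section GeomSum

open Polynomial

theorem natDegree_geom_sum_X {R : Type*} [Ring R] [Nontrivial R] (n : ℕ) :
    (∑ j ∈ Finset.range n, (Polynomial.X : R[X]) ^ j).natDegree = n - 1 := by
  rcases eq_or_ne n 0 with rfl | hn
  · simp
  have h := congrArg natDegree (geom_sum_mul (Polynomial.X : R[X]) n)
  rw [← Polynomial.C_1, (monic_geom_sum_X hn).natDegree_mul (monic_X_sub_C 1), natDegree_X_sub_C,
    natDegree_X_pow_sub_C] at h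
  omega

theorem monic_prod_geom_sum_X {ι R : Type*} [Fintype ι] [CommRing R] {a : ι → ℕ}
    (ha : ∀ i, a i ≠ 0) : (∏ i, ∑ j ∈ Finset.range (a i), (Polynomial.X : R[X]) ^ j).Monic :=
  monic_prod_of_monic _ _ fun i _ => monic_geom_sum_X (ha i)

theorem natDegree_prod_geom_sum_X {ι R : Type*} [Fintype ι] [CommRing R] [Nontrivial R]
    {a : ι → ℕ} (ha : ∀ i, a i ≠ 0) :
    (∏ i, ∑ j ∈ Finset.range (a i), (Polynomial.X : R[X]) ^ j).natDegree = ∑ i, (a i - 1) := by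
  rw [natDegree_prod_of_monic _ _ fun i _ => monic_geom_sum_X (ha i)]
  simp only [natDegree_geom_sum_X]

end GeomSum

section Hilbert

open RingTheory.Sequence

variable {K : Type} [Field K] {n : ℕ} {J : Ideal (MvPolynomial (Fin n) K)}

instance finite_homogeneousSubmodule {σ R : Type*} [Finite σ] [CommSemiring R] (d : ℕ) :
    Module.Finite R (homogeneousSubmodule σ R d) :=
  Module.Finite.iff_fg.mpr (homogeneousSubmodule_fg σ R d)

theorem ker_quotientMkₐ_toLinearMap {R A : Type*} [CommRing R] [CommRing A] [Algebra R A]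
    (I : Ideal A) : LinearMap.ker (Ideal.Quotient.mkₐ R I).toLinearMap = I.restrictScalars R := by
  ext
  simp [Ideal.Quotient.eq_zero_iff_mem]

theorem hilbQ_add_hilb (J : Ideal (MvPolynomial (Fin n) K)) (d : ℕ) :
    hilbQ J d + hilb J d = Module.finrank K (homogeneousSubmodule (Fin n) K d) := by
  rw [hilb, ← ker_quotientMkₐ_toLinearMap, inf_comm]
  exact finrank_map_add_finrank_inf_ker _ _

theorem finrank_map_mk_add_hilb {I : Ideal (MvPolynomial (Fin n) K)} (hJI : J ≤ I) (d : ℕ) :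
    Module.finrank K ((I.restrictScalars K ⊓ homogeneousSubmodule (Fin n) K d).map
      (Ideal.Quotient.mkₐ K J).toLinearMap) + hilb J d = hilb I d := by
  have hJI' : J.restrictScalars K ≤ I.restrictScalars K := hJI
  rw [hilb, hilb, ← finrank_map_add_finrank_inf_ker (Ideal.Quotient.mkₐ K J).toLinearMap
    (I.restrictScalars K ⊓ _), ker_quotientMkₐ_toLinearMap, inf_right_comm, inf_eq_right.mpr hJI']

theorem hilbQ_eq_zero_iff {t : ℕ} :
    hilbQ J t = 0 ↔ ∀ g : MvPolynomial (Fin n) K, g.IsHomogeneous t → g ∈ J := by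
  rw [hilbQ, Submodule.finrank_eq_zero, eq_bot_iff, Submodule.map_le_iff_le_comap,
    Submodule.comap_bot, ker_quotientMkₐ_toLinearMap]
  rfl

attribute [local instance] MvPolynomial.gradedAlgebra in
theorem isHomog_span {T : Set (MvPolynomial (Fin n) K)}
    (hT : ∀ f ∈ T, ∃ d, f.IsHomogeneous d) : IsHomog (Ideal.span T) := fun _ hg d =>
  homogeneousComponent_mem_of_mem (Ideal.homogeneous_span _ T hT) hg d

theorem mem_sup_span_singleton_iff_of_isHomogeneous (hJ : IsHomog J) {f x : MvPolynomial (Fin n) K}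
    {a t : ℕ} (hf : f.IsHomogeneous a) (hx : x.IsHomogeneous (t + a)) :
    x ∈ J ⊔ Ideal.span {f} ↔ ∃ g, g.IsHomogeneous t ∧ x - f * g ∈ J := by
  rw [sup_comm, Ideal.mem_span_singleton_sup]
  constructor
  · rintro ⟨g, b, hb, rfl⟩
    refine ⟨homogeneousComponent t g, homogeneousComponent_isHomogeneous t g, ?_⟩
    have hcomp := hJ b hb (t + a)
    rw [← add_sub_cancel_left (g * f) b, map_sub, homogeneousComponent_eq_self hx, mul_comm g f,
      homogeneousComponent_add_mul hf, mul_comm f g] at hcomp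
    exact hcomp
  · rintro ⟨g, -, hg⟩
    exact ⟨g, _, hg, by ring⟩

theorem mem_sup_span_singleton_iff_of_isHomogeneous_of_lt (hJ : IsHomog J)
    {f x : MvPolynomial (Fin n) K} {a t : ℕ} (hf : f.IsHomogeneous a) (hx : x.IsHomogeneous t)
    (ht : t < a) : x ∈ J ⊔ Ideal.span {f} ↔ x ∈ J := by
  refine ⟨fun h => ?_, Ideal.mem_sup_left⟩
  rw [sup_comm, Ideal.mem_span_singleton_sup] at h
  obtain ⟨g, b, hb, rfl⟩ := h
  have hcomp := hJ b hb t
  rwa [← add_sub_cancel_left (g * f) b, map_sub, homogeneousComponent_eq_self hx, mul_comm g f,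
    homogeneousComponent_mul_of_lt hf g ht, sub_zero, mul_comm f g] at hcomp

theorem map_mk_sup_span_singleton_inf (hJ : IsHomog J) {f : MvPolynomial (Fin n) K} {a : ℕ}
    (hf : f.IsHomogeneous a) (t : ℕ) :
    ((J ⊔ Ideal.span {f}).restrictScalars K ⊓ homogeneousSubmodule (Fin n) K (t + a)).map
        (Ideal.Quotient.mkₐ K J).toLinearMap =
      (homogeneousSubmodule (Fin n) K t).map
        ((Ideal.Quotient.mkₐ K J).toLinearMap ∘ₗ LinearMap.mulLeft K f) := by
  ext y
  constructor
  · rintro ⟨x, ⟨hxJ, hx⟩, rfl⟩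
    obtain ⟨g, hg, hxg⟩ := (mem_sup_span_singleton_iff_of_isHomogeneous hJ hf hx).mp hxJ
    exact ⟨g, hg, (Ideal.Quotient.eq.mpr hxg).symm⟩
  · rintro ⟨g, hg, rfl⟩
    have hfg : (f * g).IsHomogeneous (t + a) := add_comm a t ▸ hf.mul hg
    exact ⟨f * g, ⟨Ideal.mem_sup_right (Ideal.mem_span_singleton.mpr (dvd_mul_right f g)), hfg⟩,
      rfl⟩

theorem hilbQ_sup_span_singleton_add (hJ : IsHomog J) {f : MvPolynomial (Fin n) K} {a : ℕ}
    (hf : f.IsHomogeneous a) (hreg : ∀ g, f * g ∈ J → g ∈ J) (t : ℕ) :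
    hilbQ (J ⊔ Ideal.span {f}) (t + a) + hilbQ J t = hilbQ J (t + a) := by
  have hker : LinearMap.ker ((Ideal.Quotient.mkₐ K J).toLinearMap ∘ₗ LinearMap.mulLeft K f) =
      J.restrictScalars K := by
    rw [LinearMap.ker_comp, ker_quotientMkₐ_toLinearMap]
    ext g
    exact ⟨hreg g, J.mul_mem_left f⟩
  have hrank := finrank_map_add_finrank_inf_ker
    ((Ideal.Quotient.mkₐ K J).toLinearMap ∘ₗ LinearMap.mulLeft K f) (homogeneousSubmodule _ K t)
  rw [hker, inf_comm, ← hilb] at hrank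
  have himage := finrank_map_mk_add_hilb (le_sup_left : J ≤ J ⊔ Ideal.span {f}) (t + a)
  rw [map_mk_sup_span_singleton_inf hJ hf] at himage
  have hsup := hilbQ_add_hilb (J ⊔ Ideal.span {f}) (t + a)
  have hJta := hilbQ_add_hilb J (t + a)
  have hJt := hilbQ_add_hilb J t
  omega

theorem hilbQ_sup_span_singleton_of_lt (hJ : IsHomog J) {f : MvPolynomial (Fin n) K} {a t : ℕ}
    (hf : f.IsHomogeneous a) (ht : t < a) : hilbQ (J ⊔ Ideal.span {f}) t = hilbQ J t := by
  have hpiece : (J ⊔ Ideal.span {f}).restrictScalars K ⊓ homogeneousSubmodule (Fin n) K t =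
      J.restrictScalars K ⊓ homogeneousSubmodule (Fin n) K t := by
    ext x
    exact and_congr_left fun hx => mem_sup_span_singleton_iff_of_isHomogeneous_of_lt hJ hf hx ht
  have hsup := hilbQ_add_hilb (J ⊔ Ideal.span {f}) t
  have hJt := hilbQ_add_hilb J t
  rw [hilb, hpiece, ← hilb] at hsup
  omega

/-- Hilbert series of `S/J`; the coefficients are integers so that `1 - X ^ a` is available. -/
noncomputable def hilbSeries (J : Ideal (MvPolynomial (Fin n) K)) : PowerSeries ℤ :=
  .mk fun t => hilbQ J t

theorem hilbSeries_sup_span_singleton (hJ : IsHomog J) {f : MvPolynomial (Fin n) K} {a : ℕ}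
    (hf : f.IsHomogeneous a) (hreg : ∀ g, f * g ∈ J → g ∈ J) :
    hilbSeries (J ⊔ Ideal.span {f}) = (1 - PowerSeries.X ^ a) * hilbSeries J := by
  rw [sub_mul, one_mul, eq_sub_iff_add_eq]
  ext t
  simp only [map_add, PowerSeries.coeff_X_pow_mul', hilbSeries, PowerSeries.coeff_mk]
  split_ifs with h
  · obtain ⟨t, rfl⟩ := Nat.exists_eq_add_of_le' h
    rw [Nat.add_sub_cancel]
    exact_mod_cast hilbQ_sup_span_singleton_add hJ hf hreg t
  · rw [add_zero, hilbQ_sup_span_singleton_of_lt hJ hf (not_le.mp h)]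

theorem hilbSeries_span_range {r : ℕ} {f : Fin r → MvPolynomial (Fin n) K} {a : Fin r → ℕ}
    (hhom : ∀ i, (f i).IsHomogeneous (a i))
    (hreg : IsWeaklyRegular (MvPolynomial (Fin n) K) (List.ofFn f)) :
    hilbSeries (Ideal.span (Set.range f)) =
      (∏ i, (1 - PowerSeries.X ^ a i)) * hilbSeries (⊥ : Ideal (MvPolynomial (Fin n) K)) := by
  induction r with
  | zero => simp
  | succ r ih =>
    rw [List.ofFn_succ', List.concat_eq_append, isWeaklyRegular_append_iff,
      isWeaklyRegular_singleton_iff, isSMulRegular_quotient_iff_mem_of_smul_mem] at hreg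
    obtain ⟨hinit, hlast⟩ := hreg
    rw [smul_eq_mul, Ideal.mul_top, ideal_ofList_ofFn] at hlast
    have hJ : IsHomog (Ideal.span (Set.range fun i => f (Fin.castSucc i))) :=
      isHomog_span (Set.forall_mem_range.mpr fun i => ⟨_, hhom _⟩)
    rw [← ideal_ofList_ofFn, List.ofFn_succ', List.concat_eq_append, Ideal.ofList_append,
      Ideal.ofList_singleton, ideal_ofList_ofFn,
      hilbSeries_sup_span_singleton hJ (hhom (Fin.last r)) hlast,
      ih (fun i => hhom i.castSucc) hinit, Fin.prod_univ_castSucc, ← mul_assoc]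
    congr 1
    exact mul_comm _ _

theorem hilbSeries_idealOfVars : hilbSeries (idealOfVars (Fin n) K) = 1 := by
  ext t
  rw [hilbSeries, PowerSeries.coeff_mk, PowerSeries.coeff_one]
  split_ifs with ht
  · subst ht
    have hdim := hilbQ_add_hilb (idealOfVars (Fin n) K) 0
    have hzero : hilb (idealOfVars (Fin n) K) 0 = 0 := by
      rw [hilb, Submodule.finrank_eq_zero, eq_bot_iff]
      rintro p ⟨hpm, hp⟩
      exact (Submodule.mem_bot K).mpr <| by
        rw [eq_C_of_isHomogeneous_zero hp, mem_idealOfVars_iff.mp hpm, C_0]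
    rw [hzero, homogeneousSubmodule_zero, Submodule.one_eq_span,
      finrank_span_singleton one_ne_zero] at hdim
    exact_mod_cast hdim
  · exact_mod_cast hilbQ_eq_zero_iff.mpr fun g hg => mem_idealOfVars_of_isHomogeneous hg ht

theorem hilbSeries_span_range_eq_coe {f : Fin n → MvPolynomial (Fin n) K} {a : Fin n → ℕ}
    (hhom : ∀ i, (f i).IsHomogeneous (a i))
    (hreg : IsWeaklyRegular (MvPolynomial (Fin n) K) (List.ofFn f)) :
    hilbSeries (Ideal.span (Set.range f)) =
      (∏ i, ∑ j ∈ Finset.range (a i), Polynomial.X ^ j : Polynomial ℤ) := by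
  -- The variables form a regular sequence too, so `(1 - X) ^ n` is inverse to `hilbSeries ⊥`.
  have hX := hilbSeries_span_range (isHomogeneous_X K) (isWeaklyRegular_ofFn_X (R := K) n)
  have hfactor (i : Fin n) : (1 - PowerSeries.X ^ a i : PowerSeries ℤ) =
      (∑ j ∈ Finset.range (a i), PowerSeries.X ^ j) * (1 - PowerSeries.X ^ 1) := by
    rw [pow_one, geom_sum_mul_neg]
  rw [hilbSeries_span_range hhom hreg, Finset.prod_congr rfl fun i _ => hfactor i,
    Finset.prod_mul_distrib, mul_assoc, ← hX, hilbSeries_idealOfVars, mul_one,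
    ← Polynomial.coeToPowerSeries.ringHom_apply]
  simp [map_prod, map_sum]

theorem hilbQ_span_range_eq_coeff {f : Fin n → MvPolynomial (Fin n) K} {a : Fin n → ℕ}
    (hhom : ∀ i, (f i).IsHomogeneous (a i))
    (hreg : IsWeaklyRegular (MvPolynomial (Fin n) K) (List.ofFn f)) (t : ℕ) :
    (hilbQ (Ideal.span (Set.range f)) t : ℤ) =
      (∏ i, ∑ j ∈ Finset.range (a i), (Polynomial.X : Polynomial ℤ) ^ j).coeff t := by
  rw [← Polynomial.coeff_coe, ← hilbSeries_span_range_eq_coe hhom hreg, hilbSeries,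
    PowerSeries.coeff_mk]

theorem hilbQ_span_range_sum_sub_one {f : Fin n → MvPolynomial (Fin n) K} {a : Fin n → ℕ}
    (hhom : ∀ i, (f i).IsHomogeneous (a i))
    (hreg : IsWeaklyRegular (MvPolynomial (Fin n) K) (List.ofFn f)) (ha : ∀ i, a i ≠ 0) :
    hilbQ (Ideal.span (Set.range f)) (∑ i, (a i - 1)) = 1 := by
  have hlead := (monic_prod_geom_sum_X (R := ℤ) ha).coeff_natDegree
  rw [natDegree_prod_geom_sum_X ha, ← hilbQ_span_range_eq_coeff hhom hreg] at hlead
  exact_mod_cast hlead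

theorem hilbQ_span_range_eq_zero_of_lt {f : Fin n → MvPolynomial (Fin n) K} {a : Fin n → ℕ}
    (hhom : ∀ i, (f i).IsHomogeneous (a i))
    (hreg : IsWeaklyRegular (MvPolynomial (Fin n) K) (List.ofFn f)) (ha : ∀ i, a i ≠ 0) {t : ℕ}
    (ht : ∑ i, (a i - 1) < t) : hilbQ (Ideal.span (Set.range f)) t = 0 := by
  have hcoeff := hilbQ_span_range_eq_coeff hhom hreg t
  rw [Polynomial.coeff_eq_zero_of_natDegree_lt (by rwa [natDegree_prod_geom_sum_X ha])] at hcoeff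
  exact_mod_cast hcoeff

end Hilbert

section Gorenstein

/-- `S/J` is a graded Artinian Gorenstein algebra with socle degree `s`: it vanishes above degree
`s` and its socle `(J : 𝔪)/J` is a line spanned by the class of a form of degree `s`. -/
structure IsArtinianGorenstein {K : Type} [Field K] {n : ℕ} (J : Ideal (MvPolynomial (Fin n) K))
    (s : ℕ) : Prop where
  isHomog : IsHomog J
  mem_of_lt : ∀ {g : MvPolynomial (Fin n) K} {t : ℕ}, g.IsHomogeneous t → s < t → g ∈ J
  exists_colon_eq : ∃ w : MvPolynomial (Fin n) K, w.IsHomogeneous s ∧ w ∉ J ∧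
    J.colon (idealOfVars (Fin n) K : Set _) = J ⊔ Ideal.span {w}

variable {K : Type} [Field K] {n : ℕ} {J : Ideal (MvPolynomial (Fin n) K)} {s : ℕ}

namespace IsRegSeq

variable {f : Fin n → MvPolynomial (Fin n) K} {a : Fin n → ℕ}

theorem degree_ne_zero (hreg : IsRegSeq f) (hhom : ∀ i, (f i).IsHomogeneous (a i)) (i : Fin n) :
    a i ≠ 0 := by
  intro hai
  have hfi : f i = C (coeff 0 (f i)) := eq_C_of_isHomogeneous_zero (hai ▸ hhom i)
  rcases eq_or_ne (coeff 0 (f i)) 0 with hc | hc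
  · have hone : (1 : MvPolynomial (Fin n) K) ∈ Ideal.span (f '' {j | j < i}) :=
      hreg.2 i 1 (by rw [hfi, hc, C_0, zero_mul]; exact zero_mem _)
    exact hreg.1 ((Ideal.eq_top_iff_one _).mpr
      (Ideal.span_mono (Set.image_subset_range _ _) hone))
  · exact hreg.1 (Ideal.eq_top_of_isUnit_mem _ (Ideal.subset_span ⟨i, rfl⟩)
      (hfi ▸ hc.isUnit.map C))

theorem isArtinianGorenstein (hreg : IsRegSeq f) (hhom : ∀ i, (f i).IsHomogeneous (a i)) :
    IsArtinianGorenstein (Ideal.span (Set.range f)) (∑ i, (a i - 1)) := by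
  have ha := hreg.degree_ne_zero hhom
  have hweak := (isWeaklyRegular_ofFn_iff f).mpr hreg.2
  have hmem {g : MvPolynomial (Fin n) K} {t : ℕ} (hg : g.IsHomogeneous t)
      (ht : ∑ i, (a i - 1) < t) : g ∈ Ideal.span (Set.range f) :=
    hilbQ_eq_zero_iff.mp (hilbQ_span_range_eq_zero_of_lt hhom hweak ha ht) g hg
  obtain ⟨w, hw, hwJ⟩ : ∃ w : MvPolynomial (Fin n) K, w.IsHomogeneous (∑ i, (a i - 1)) ∧
      w ∉ Ideal.span (Set.range f) := by
    have hne : hilbQ (Ideal.span (Set.range f)) (∑ i, (a i - 1)) ≠ 0 :=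
      (hilbQ_span_range_sum_sub_one hhom hweak ha).trans_ne one_ne_zero
    simpa using hilbQ_eq_zero_iff.not.mp hne
  have hwcolon := mem_colon_idealOfVars_iff.mpr fun i =>
    hmem ((isHomogeneous_X K i).mul hw) (by omega)
  have hle : Ideal.span (Set.range f) ≤ idealOfVars (Fin n) K :=
    Ideal.span_le.mpr (Set.range_subset_iff.mpr fun i =>
      mem_idealOfVars_of_isHomogeneous (hhom i) (ha i))
  obtain ⟨v, hv⟩ := exists_colon_ofList_eq_sup_span_singleton hweak (isWeaklyRegular_ofFn_X n)
    (by simp) (by simpa only [ideal_ofList_ofFn] using hle)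
  rw [ideal_ofList_ofFn, ideal_ofList_ofFn] at hv
  exact ⟨isHomog_span (Set.forall_mem_range.mpr fun i => ⟨_, hhom i⟩), hmem, w, hw, hwJ,
    colon_idealOfVars_eq_sup_span_singleton hv hwcolon hwJ⟩

end IsRegSeq

namespace IsArtinianGorenstein

theorem exists_X_mul_notMem (hJ : IsArtinianGorenstein J s) {u : MvPolynomial (Fin n) K} {j : ℕ}
    (hu : u.IsHomogeneous j) (hj : j < s) (huJ : u ∉ J) : ∃ i, X i * u ∉ J := by
  by_contra! hsocle
  obtain ⟨w, hw, -, hcolon⟩ := hJ.exists_colon_eq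
  obtain ⟨c, hc⟩ := exists_sub_C_mul_mem
    (hcolon ▸ Ideal.mem_sup_right (Ideal.mem_span_singleton_self w))
    (hcolon ▸ mem_colon_idealOfVars_iff.mpr hsocle)
  have hcomp := hJ.isHomog _ hc j
  rw [map_sub, homogeneousComponent_C_mul, homogeneousComponent_eq_self hu,
    homogeneousComponent_of_mem hw, if_neg hj.ne, mul_zero, sub_zero] at hcomp
  exact huJ hcomp

theorem exists_mul_notMem (hJ : IsArtinianGorenstein J s) {u : MvPolynomial (Fin n) K} {j k : ℕ}
    (hu : u.IsHomogeneous j) (hjk : j + k = s) (huJ : u ∉ J) :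
    ∃ h : MvPolynomial (Fin n) K, h.IsHomogeneous k ∧ u * h ∉ J := by
  induction k generalizing j u with
  | zero => exact ⟨1, isHomogeneous_one _ _, by rwa [mul_one]⟩
  | succ k ih =>
    obtain ⟨i, hi⟩ := hJ.exists_X_mul_notMem hu (by omega) huJ
    obtain ⟨h, hh, hmul⟩ := ih ((isHomogeneous_X K i).mul hu) (by omega) hi
    exact ⟨X i * h, add_comm 1 k ▸ (isHomogeneous_X K i).mul hh,
      by rwa [mul_left_comm, ← mul_assoc]⟩

theorem mem_iff_forall_mul_mem (hJ : IsArtinianGorenstein J s) {u : MvPolynomial (Fin n) K}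
    {j k : ℕ} (hu : u.IsHomogeneous j) (hjk : j + k = s) :
    u ∈ J ↔ ∀ h : MvPolynomial (Fin n) K, h.IsHomogeneous k → u * h ∈ J := by
  refine ⟨fun huJ h _ => J.mul_mem_right h huJ, fun hmul => ?_⟩
  by_contra huJ
  obtain ⟨h, hh, huh⟩ := hJ.exists_mul_notMem hu hjk huJ
  exact huh (hmul h hh)

theorem mem_colon_iff (hJ : IsArtinianGorenstein J s) {I : Ideal (MvPolynomial (Fin n) K)}
    (hI : IsHomog I) {h : MvPolynomial (Fin n) K} {k t : ℕ} (hh : h.IsHomogeneous k)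
    (htk : t + k = s) :
    h ∈ J.colon (I : Set _) ↔ ∀ g ∈ I, g.IsHomogeneous t → g * h ∈ J := by
  refine ⟨fun hcolon g hg _ => mul_comm h g ▸ Submodule.mem_colon.mp hcolon g hg,
    fun hmul => Submodule.mem_colon.mpr fun g hg => ?_⟩
  rw [smul_eq_mul, ← sum_homogeneousComponent g, Finset.mul_sum]
  refine sum_mem fun d _ => ?_
  have hgd := homogeneousComponent_isHomogeneous d g
  rcases lt_or_ge t d with htd | hdt
  · exact hJ.mem_of_lt (hh.mul hgd) (by omega)
  · rw [hJ.mem_iff_forall_mul_mem (k := t - d) (hh.mul hgd) (by omega)]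
    intro y hy
    have hgdy : (homogeneousComponent d g * y).IsHomogeneous t :=
      Nat.add_sub_cancel' hdt ▸ hgd.mul hy
    rw [mul_assoc, mul_comm]
    exact hmul _ (I.mul_mem_right y (hI g hg d)) hgdy

theorem exists_dual (hJ : IsArtinianGorenstein J s) :
    ∃ φ : Module.Dual K (MvPolynomial (Fin n) K),
      ∀ g : MvPolynomial (Fin n) K, g.IsHomogeneous s → (φ g = 0 ↔ g ∈ J) := by
  obtain ⟨w, -, hwJ, hcolon⟩ := hJ.exists_colon_eq
  obtain ⟨φ, hφw, hφJ⟩ := Submodule.exists_le_ker_of_notMem (p := J.restrictScalars K) hwJ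
  refine ⟨φ, fun g hg => ⟨fun hφg => ?_, fun hgJ => hφJ hgJ⟩⟩
  have hsocle : g ∈ J ⊔ Ideal.span {w} := hcolon ▸ mem_colon_idealOfVars_iff.mpr fun i =>
    hJ.mem_of_lt ((isHomogeneous_X K i).mul hg) (by omega)
  obtain ⟨c, hc⟩ := exists_sub_C_mul_mem
    (hcolon ▸ Ideal.mem_sup_right (Ideal.mem_span_singleton_self w)) hsocle
  have hcφ : φ (g - C c * w) = 0 := hφJ hc
  rw [map_sub, hφg, zero_sub, neg_eq_zero, ← smul_eq_C_mul, map_smul, smul_eq_zero] at hcφ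
  simpa [hcφ.resolve_right hφw] using hc

variable {φ : Module.Dual K (MvPolynomial (Fin n) K)} {I : Ideal (MvPolynomial (Fin n) K)} {t k : ℕ}

theorem inf_dualCoannihilator_map_mul (hJ : IsArtinianGorenstein J s)
    (hφ : ∀ g : MvPolynomial (Fin n) K, g.IsHomogeneous s → (φ g = 0 ↔ g ∈ J)) (hI : IsHomog I)
    (htk : t + k = s) :
    homogeneousSubmodule (Fin n) K k ⊓
        ((I.restrictScalars K ⊓ homogeneousSubmodule (Fin n) K t).map
          ((LinearMap.mul K (MvPolynomial (Fin n) K)).compr₂ φ)).dualCoannihilator =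
      (J.colon (I : Set _)).restrictScalars K ⊓ homogeneousSubmodule (Fin n) K k := by
  ext h
  rw [inf_comm]
  refine and_congr_left fun hh => Iff.trans ?_ (hJ.mem_colon_iff hI hh htk).symm
  rw [SetLike.mem_coe, Submodule.mem_dualCoannihilator]
  constructor
  · intro hann g hgI hg
    exact (hφ _ (htk ▸ hg.mul hh)).mp (hann _ ⟨g, ⟨hgI, hg⟩, rfl⟩)
  · rintro hmul _ ⟨g, ⟨hgI, hg⟩, rfl⟩
    exact (hφ _ (htk ▸ IsHomogeneous.mul hg hh)).mpr (hmul g hgI hg)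

theorem inf_dualCoannihilator_map_mul_flip (hJ : IsArtinianGorenstein J s)
    (hφ : ∀ g : MvPolynomial (Fin n) K, g.IsHomogeneous s → (φ g = 0 ↔ g ∈ J)) (hJI : J ≤ I)
    (htk : t + k = s) :
    I.restrictScalars K ⊓ homogeneousSubmodule (Fin n) K t ⊓
        ((homogeneousSubmodule (Fin n) K k).map
          ((LinearMap.mul K (MvPolynomial (Fin n) K)).compr₂ φ).flip).dualCoannihilator =
      J.restrictScalars K ⊓ homogeneousSubmodule (Fin n) K t := by
  ext g
  rw [Submodule.mem_inf, Submodule.mem_inf, Submodule.mem_dualCoannihilator]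
  constructor
  · rintro ⟨⟨-, hg⟩, hann⟩
    refine ⟨(hJ.mem_iff_forall_mul_mem hg htk).mpr fun h hh => ?_, hg⟩
    exact (hφ _ (htk ▸ IsHomogeneous.mul hg hh)).mp (hann _ ⟨h, hh, rfl⟩)
  · rintro ⟨hgJ, hg⟩
    refine ⟨⟨hJI hgJ, hg⟩, ?_⟩
    rintro _ ⟨h, hh, rfl⟩
    exact (hφ _ (htk ▸ IsHomogeneous.mul hg hh)).mpr (J.mul_mem_right h hgJ)

end IsArtinianGorenstein

theorem stmt4_general (hJ : IsArtinianGorenstein J s) {I : Ideal (MvPolynomial (Fin n) K)}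
    (hI : IsHomog I) (hJI : J ≤ I) {t : ℕ} (ht : t ≤ s) :
    hilbQ J t = hilbQ I t + hilbQ (J.colon (I : Set _)) (s - t) := by
  have hts : t + (s - t) = s := Nat.add_sub_cancel' ht
  obtain ⟨φ, hφ⟩ := hJ.exists_dual
  have : FiniteDimensional K ↥(I.restrictScalars K ⊓ homogeneousSubmodule (Fin n) K t) :=
    Submodule.finiteDimensional_inf_right _ _
  have hdim := finrank_add_finrank_inf_dualCoannihilator
    ((LinearMap.mul K (MvPolynomial (Fin n) K)).compr₂ φ)
    (I.restrictScalars K ⊓ homogeneousSubmodule (Fin n) K t)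
    (homogeneousSubmodule (Fin n) K (s - t))
  rw [hJ.inf_dualCoannihilator_map_mul hφ hI hts,
    hJ.inf_dualCoannihilator_map_mul_flip hφ hJI hts, ← hilb, ← hilb, ← hilb] at hdim
  have hJt := hilbQ_add_hilb J t
  have hIt := hilbQ_add_hilb I t
  have hcolon := hilbQ_add_hilb (J.colon (I : Set _)) (s - t)
  omega

end Gorenstein

/-- liaison formula `H(S/J,t) = H(S/I,t) + H(S/(J:I), s-t)` for `0 ≤ t ≤ s`,
where `J` is generated by a full homogeneous regular sequence of degrees `a i`,
`J ⊆ I`, and `s = Σ (a i - 1)`. -/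
theorem stmt4 {K : Type} [Field K] {n : ℕ}
    (f : Fin n → MvPolynomial (Fin n) K) (a : Fin n → ℕ)
    (hreg : IsRegSeq f) (hhom : ∀ i, (f i).IsHomogeneous (a i))
    (I : Ideal (MvPolynomial (Fin n) K)) (hI : IsHomog I)
    (hJI : Ideal.span (Set.range f) ≤ I)
    (s : ℕ) (hs : s = ∑ i, (a i - 1)) :
    ∀ t : ℕ, t ≤ s →
      hilbQ (Ideal.span (Set.range f)) t =
        hilbQ I t + hilbQ (Submodule.colon (Ideal.span (Set.range f)) I) (s - t) := by
  rw [hs]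
  exact fun t => stmt4_general (hreg.isArtinianGorenstein hhom) hI hJI
end

section
/- Let a = (a_1,...,a_r) with 2 ≤ a_1 ≤ ... ≤ a_r. If every homogeneous ideal of k[x_1,...,x_r] containing a regular sequence of degrees a_1,...,a_r has the same Hilbert function as an ideal containing x_1^{a_1},...,x_r^{a_r} (i.e., EGH_{a,r} holds), then for every n ≥ r, every homogeneous ideal of k[x_1,...,x_n] containing a homogeneous regular sequence of degrees a_1,...,a_r has the same Hilbert function as an ideal of k[x_1,...,x_n] containing x_1^{a_1},...,x_r^{a_r}. -/
open MvPolynomial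

/-- `EGHnr K n r h a`: every homogeneous ideal of `K[x_1,...,x_n]` containing a homogeneous
regular sequence of length `r` and degrees `a 0, ..., a (r-1)` has the same Hilbert function
as some ideal containing the pure powers `x_i^{a i}` for `1 ≤ i ≤ r`. -/
def EGHnr (K : Type) [Field K] (n r : ℕ) (h : r ≤ n) (a : Fin r → ℕ) : Prop :=
  ∀ I : Ideal (MvPolynomial (Fin n) K), IsHomog I →
    (∃ f : Fin r → MvPolynomial (Fin n) K,
      IsRegSeq f ∧ (∀ i, (f i).IsHomogeneous (a i)) ∧ ∀ i, f i ∈ I) →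
    ∃ J : Ideal (MvPolynomial (Fin n) K),
      (∀ i : Fin r, (X (Fin.castLE h i) : MvPolynomial (Fin n) K) ^ a i ∈ J) ∧
      ∀ d : ℕ, hilb I d = hilb J d

/- The induction on the number of variables works with a stronger property: the ideals containing
the pure powers can be chosen monotonically in `I`. When `n = r`, the hypothesis makes this possible
with lex-plus-powers ideals, since by the Clements–Lindström theorem they are determined by, and
monotone in, the Hilbert function. Passing from `n` to `n + 1` variables, the ideal generated by the
regular sequence has fewer than `n + 1` generators, so its quotient has no socle and, `K` being
infinite, some linear form `ℓ` restricts the sequence to a regular sequence on the hyperplane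
`ℓ = 0`. Iterating `hilb I (d + 1) = hilb (I|ℓ) (d + 1) + hilb (I : ℓ) d`, the ideal `I` has the
Hilbert function of `⨁ⱼ Λ((I : ℓʲ)|ℓ) xₙʲ`, where `Λ` is the monotone choice in `n` variables;
monotonicity of `Λ` is what makes this sum an ideal. -/

open scoped Finset

namespace EGH

section Box

variable {ι : Type*} [Fintype ι] [LinearOrder ι]

/-- The exponent vectors of degree `d` in the box `∏ i, [l i, h i]`. -/
def box (l h : ι → ℕ) (d : ℕ) : Finset (ι →₀ ℕ) :=
  {u ∈ Finset.univ.finsuppAntidiag d | ∀ i, l i ≤ u i ∧ u i ≤ h i}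

/-- The upper shadow of `A` in the box bounded above by `h`: the exponents obtained from elements
of `A` by multiplying with one variable. -/
noncomputable def upShadow (h : ι → ℕ) (A : Finset (ι →₀ ℕ)) : Finset (ι →₀ ℕ) :=
  A.biUnion fun u ↦ ({i | u i < h i} : Finset ι).image fun i ↦ u + Finsupp.single i 1

/-- `S` is a lexicographic segment of `box l h d`: an upper set for the lexicographic order. -/
structure IsLexSegment (l h : ι → ℕ) (d : ℕ) (S : Finset (ι →₀ ℕ)) : Prop where
  subset : S ⊆ box l h d
  mem_of_le : ∀ v ∈ S, ∀ u ∈ box l h d, toLex v ≤ toLex u → u ∈ S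

variable {l h : ι → ℕ} {d : ℕ} {u v w y : ι →₀ ℕ} {A B S T : Finset (ι →₀ ℕ)} {i j : ι}

theorem mem_box : u ∈ box l h d ↔ (∀ i, l i ≤ u i ∧ u i ≤ h i) ∧ ∑ i, u i = d := by
  simp [box, and_comm]

theorem mem_upShadow :
    y ∈ upShadow h A ↔ ∃ u ∈ A, ∃ i, u i < h i ∧ u + Finsupp.single i 1 = y := by
  simp [upShadow]

theorem le_of_mem_box (hu : u ∈ box l h d) (i : ι) : l i ≤ u i := ((mem_box.1 hu).1 i).1

theorem apply_le_of_mem_box (hu : u ∈ box l h d) (i : ι) : u i ≤ h i := ((mem_box.1 hu).1 i).2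

theorem sum_eq_of_mem_box (hu : u ∈ box l h d) : ∑ i, u i = d := (mem_box.1 hu).2

theorem add_single_mem_upShadow (hu : u ∈ A) (hi : u i < h i) :
    u + Finsupp.single i 1 ∈ upShadow h A :=
  mem_upShadow.2 ⟨u, hu, i, hi, rfl⟩

theorem upShadow_mono (hAB : A ⊆ B) : upShadow h A ⊆ upShadow h B :=
  Finset.biUnion_subset_biUnion_of_subset_left _ hAB

theorem add_single_mem_box (hu : u ∈ box l h d) (hi : u i < h i) :
    u + Finsupp.single i 1 ∈ box l h (d + 1) := by
  refine mem_box.2 ⟨fun j ↦ ?_, ?_⟩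
  · have := (mem_box.1 hu).1 j
    rcases eq_or_ne i j with rfl | hij
    · simp only [Finsupp.add_apply, Finsupp.single_eq_same]
      omega
    · simpa [Finsupp.single_eq_of_ne hij.symm] using this
  · simp [Finset.sum_add_distrib, sum_eq_of_mem_box hu]

theorem upShadow_subset_box (hA : A ⊆ box l h d) : upShadow h A ⊆ box l h (d + 1) := by
  intro y hy
  obtain ⟨u, hu, i, hi, rfl⟩ := mem_upShadow.1 hy
  exact add_single_mem_box (hA hu) hi

theorem exists_add_single_of_mem_box (hy : y ∈ box l h (d + 1)) (hj : l j < y j) :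
    ∃ w ∈ box l h d, w + Finsupp.single j 1 = y := by
  have hle : Finsupp.single j 1 ≤ y := Finsupp.single_le_iff.2 (by omega)
  have hyj : y - Finsupp.single j 1 + Finsupp.single j 1 = y := tsub_add_cancel_of_le hle
  refine ⟨y - Finsupp.single j 1, mem_box.2 ⟨fun i ↦ ?_, ?_⟩, hyj⟩
  · have := (mem_box.1 hy).1 i
    rcases eq_or_ne i j with rfl | hij
    · simp only [Finsupp.tsub_apply, Finsupp.single_eq_same]
      omega
    · simpa [Finsupp.single_eq_of_ne hij] using this
  · have := sum_eq_of_mem_box hy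
    rw [← hyj] at this
    simpa [Finset.sum_add_distrib] using this

theorem box_nonempty (hlh : l ≤ h) (hl : ∑ i, l i ≤ d) (hd : d ≤ ∑ i, h i) :
    (box l h d).Nonempty := by
  induction d, hl using Nat.le_induction with
  | base => exact ⟨Finsupp.equivFunOnFinite.symm l, mem_box.2 ⟨fun i ↦ ⟨le_rfl, hlh i⟩, rfl⟩⟩
  | succ d _ ih =>
    obtain ⟨w, hw⟩ := ih (by omega)
    obtain ⟨i, -, hi⟩ : ∃ i ∈ Finset.univ, w i < h i :=
      Finset.exists_lt_of_sum_lt (by rw [sum_eq_of_mem_box hw]; omega)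
    exact ⟨_, add_single_mem_box hw hi⟩

theorem eq_of_le_of_mem_box {l' h' : ι → ℕ} (hu : u ∈ box l h d) (hw : w ∈ box l' h' d)
    (hle : ∀ i, u i ≤ w i) : u = w :=
  Finsupp.ext fun i ↦ (Finset.sum_eq_sum_iff_of_le fun i _ ↦ hle i).1
    ((sum_eq_of_mem_box hu).trans (sum_eq_of_mem_box hw).symm) i (Finset.mem_univ i)

end Box

section Lex

variable {ι : Type*} [LinearOrder ι] {u w : ι →₀ ℕ} {p q : ι}

theorem toLex_lt_toLex : toLex u < toLex w ↔ ∃ p, (∀ q < p, u q = w q) ∧ u p < w p :=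
  Finsupp.Lex.lt_iff

theorem toLex_lt_of_le_of_lt (hle : ∀ q < p, u q ≤ w q) (hlt : u p < w p) :
    toLex u < toLex w := by
  refine lt_of_not_ge fun hge ↦ ?_
  rcases hge.lt_or_eq with hwu | hwu
  · obtain ⟨q, hq, hqlt⟩ := toLex_lt_toLex.1 hwu
    rcases lt_trichotomy q p with hqp | rfl | hqp
    · exact (hle q hqp).not_gt hqlt
    · exact hlt.not_gt hqlt
    · exact hlt.ne (hq p hqp).symm
  · exact hlt.ne (by rw [toLex_inj.1 hwu])

theorem add_single_ne_of_toLex_lt (huw : toLex u < toLex w) (hpq : p ≤ q) :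
    w + Finsupp.single p 1 ≠ u + Finsupp.single q 1 := fun heq ↦ by
  refine (add_lt_add_of_lt_of_le huw (Finsupp.Lex.single_le_iff.2 hpq)).ne ?_
  rw [← toLex_add, ← toLex_add, heq]

end Lex

section Segment

variable {ι : Type*} [Fintype ι] [LinearOrder ι]
variable {l h : ι → ℕ} {d : ℕ} {u v w y : ι →₀ ℕ} {A B S T : Finset (ι →₀ ℕ)} {i j : ι}

theorem exists_single_removal_ge (hu : u ∈ box l h d)
    (hy : y ∈ box l h (d + 1)) (hlt : toLex (u + Finsupp.single i 1) < toLex y) :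
    ∃ w ∈ box l h d, toLex u ≤ toLex w ∧ ∃ j, w + Finsupp.single j 1 = y := by
  obtain ⟨p, hp, hlt⟩ := toLex_lt_toLex.1 hlt
  have hle : u ≤ u + Finsupp.single i 1 := le_self_add
  by_cases hex : ∃ j, p < j ∧ l j < y j
  · obtain ⟨j, hpj, hj⟩ := hex
    obtain ⟨w, hw, rfl⟩ := exists_add_single_of_mem_box hy hj
    have hwq : ∀ q ≤ p, (w + Finsupp.single j 1 : ι →₀ ℕ) q = w q := fun q hq ↦ by
      simp [Finsupp.single_eq_of_ne (hq.trans_lt hpj).ne]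
    refine ⟨w, hw, (toLex_lt_of_le_of_lt (p := p) (fun q hq ↦ ?_) ?_).le, j, rfl⟩
    · exact (hle q).trans ((hp q hq).trans (hwq q hq.le)).le
    · exact ((hle p).trans_lt hlt).trans_eq (hwq p le_rfl)
  · push Not at hex
    have hup : u p < y p := (hle p).trans_lt hlt
    obtain ⟨w, hw, rfl⟩ := exists_add_single_of_mem_box hy ((le_of_mem_box hu p).trans_lt hup)
    have hwq : ∀ q ≠ p, (w + Finsupp.single p 1 : ι →₀ ℕ) q = w q := fun q hq ↦ by
      simp [Finsupp.single_eq_of_ne hq]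
    have huw : ∀ q ≤ p, u q ≤ w q := fun q hq ↦ by
      rcases hq.lt_or_eq with hq | rfl
      · exact (hle q).trans ((hp q hq).trans (hwq q hq.ne)).le
      · simpa [Nat.lt_succ_iff] using hup
    refine ⟨w, hw, ?_, p, rfl⟩
    by_cases hlt' : ∃ q ≤ p, u q < w q
    · obtain ⟨q, hq, hqlt⟩ := hlt'
      exact (toLex_lt_of_le_of_lt (fun q' hq' ↦ huw q' (hq'.le.trans hq)) hqlt).le
    · push Not at hlt'
      refine (congrArg toLex (eq_of_le_of_mem_box hw hu fun q ↦ ?_)).ge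
      rcases le_or_gt q p with hq | hq
      · exact hlt' q hq
      · exact (hwq q hq.ne').ge.trans ((hex q hq).trans (le_of_mem_box hu q))

theorem IsLexSegment.upShadow (hS : IsLexSegment l h d S) :
    IsLexSegment l h (d + 1) (upShadow h S) where
  subset := upShadow_subset_box hS.subset
  mem_of_le := by
    intro v hv y hy hle
    obtain ⟨u, hu, i, -, rfl⟩ := mem_upShadow.1 hv
    rcases hle.lt_or_eq with hlt | heq
    · obtain ⟨w, hw, huw, j, rfl⟩ := exists_single_removal_ge (hS.subset hu) hy hlt
      have hj := apply_le_of_mem_box hy j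
      simp only [Finsupp.add_apply, Finsupp.single_eq_same] at hj
      exact add_single_mem_upShadow (hS.mem_of_le u hu w hw huw) hj
    · rwa [← toLex_inj.1 heq]

theorem IsLexSegment.subset_or_subset (hS : IsLexSegment l h d S) (hT : IsLexSegment l h d T) :
    S ⊆ T ∨ T ⊆ S := by
  by_contra! hc
  obtain ⟨x, hx, hxT⟩ := Finset.not_subset.1 hc.1
  obtain ⟨y, hy, hyS⟩ := Finset.not_subset.1 hc.2
  rcases le_total (toLex x) (toLex y) with hxy | hyx
  · exact hyS (hS.mem_of_le x hx y (hT.subset hy) hxy)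
  · exact hxT (hT.mem_of_le y hy x (hS.subset hx) hyx)

theorem IsLexSegment.subset_of_card_le (hS : IsLexSegment l h d S) (hT : IsLexSegment l h d T)
    (hc : #S ≤ #T) : S ⊆ T :=
  (hS.subset_or_subset hT).elim id fun hTS ↦ (Finset.eq_of_subset_of_card_le hTS hc).ge

end Segment

section LexTop

variable {ι : Type*} [LinearOrder ι] {Y : Finset (ι →₀ ℕ)} {u v : ι →₀ ℕ} {m k : ℕ}

/-- The `m` lexicographically largest elements of `Y`, or all of `Y` if there are fewer. -/
def lexTop (Y : Finset (ι →₀ ℕ)) (m : ℕ) : Finset (ι →₀ ℕ) :=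
  {u ∈ Y | #{w ∈ Y | toLex u < toLex w} < m}

theorem lexTop_subset : lexTop Y m ⊆ Y := Finset.filter_subset _ _

theorem lexTop_mono (hmk : m ≤ k) : lexTop Y m ⊆ lexTop Y k :=
  Finset.monotone_filter_right _ fun _ _ hu ↦ hu.trans_le hmk

theorem mem_lexTop_of_le (hv : v ∈ lexTop Y m) (hu : u ∈ Y) (hvu : toLex v ≤ toLex u) :
    u ∈ lexTop Y m := by
  refine Finset.mem_filter.2 ⟨hu, (Finset.card_le_card ?_).trans_lt (Finset.mem_filter.1 hv).2⟩
  exact Finset.monotone_filter_right _ fun _ _ hw ↦ hvu.trans_lt hw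

theorem card_filter_toLex_lt_injOn :
    Set.InjOn (fun u ↦ #{w ∈ Y | toLex u < toLex w}) (Y : Set (ι →₀ ℕ)) := by
  have key : ∀ u ∈ Y, ∀ v, toLex v < toLex u →
      #{w ∈ Y | toLex u < toLex w} < #{w ∈ Y | toLex v < toLex w} := fun u hu v hvu ↦
    Finset.card_lt_card <| (Finset.ssubset_iff_of_subset <|
      Finset.monotone_filter_right _ fun _ _ hw ↦ hvu.trans hw).2
        ⟨u, Finset.mem_filter.2 ⟨hu, hvu⟩, fun hu' ↦ lt_irrefl _ (Finset.mem_filter.1 hu').2⟩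
  intro u hu v hv huv
  rcases lt_trichotomy (toLex u) (toLex v) with hlt | heq | hlt
  · exact absurd huv (key v hv u hlt).ne'
  · exact toLex_inj.1 heq
  · exact absurd huv (key u hu v hlt).ne

theorem image_card_filter_toLex_lt :
    Y.image (fun u ↦ #{w ∈ Y | toLex u < toLex w}) = Finset.range #Y := by
  refine Finset.eq_of_subset_of_card_le (Finset.image_subset_iff.2 fun u hu ↦ ?_) ?_
  · exact Finset.mem_range.2 <| Finset.card_lt_card <| Finset.filter_ssubset.2 ⟨u, hu, lt_irrefl _⟩
  · rw [Finset.card_image_of_injOn card_filter_toLex_lt_injOn, Finset.card_range]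

theorem card_lexTop (hm : m ≤ #Y) : #(lexTop Y m) = m := by
  have himage : (lexTop Y m).image (fun u ↦ #{w ∈ Y | toLex u < toLex w}) = Finset.range m := by
    rw [lexTop, ← Finset.filter_image (p := (· < m)), image_card_filter_toLex_lt]
    ext k
    simp only [Finset.mem_filter, Finset.mem_range]
    omega
  rw [← Finset.card_image_of_injOn (card_filter_toLex_lt_injOn.mono lexTop_subset), himage,
    Finset.card_range]

theorem isLexSegment_lexTop [Fintype ι] (l h : ι → ℕ) (d m : ℕ) :
    IsLexSegment l h d (lexTop (box l h d) m) :=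
  ⟨lexTop_subset, fun _ hv _ hu hvu ↦ mem_lexTop_of_le hv hu hvu⟩

end LexTop

section Compression

variable {ι : Type*}

/-- The elements of `Y` whose `i`-th exponent is `t`. -/
def slice (i : ι) (t : ℕ) (Y : Finset (ι →₀ ℕ)) : Finset (ι →₀ ℕ) := {u ∈ Y | u i = t}

variable {u v : ι →₀ ℕ} {A B Y : Finset (ι →₀ ℕ)} {i : ι} {t : ℕ}

theorem mem_slice : u ∈ slice i t Y ↔ u ∈ Y ∧ u i = t := Finset.mem_filter

theorem slice_mono (hAB : A ⊆ B) : slice i t A ⊆ slice i t B := Finset.filter_subset_filter _ hAB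

variable [LinearOrder ι]

/-- The elements of `Y` whose `i`-th exponent is `t - 1`, multiplied by the `i`-th variable; this is
empty if `t = 0`. -/
noncomputable def raisedSlice (i : ι) (t : ℕ) (Y : Finset (ι →₀ ℕ)) : Finset (ι →₀ ℕ) :=
  {u ∈ Y | u i + 1 = t}.image (· + Finsupp.single i 1)

/-- The compression of `A ⊆ Y` in direction `i`: each slice of `A` is replaced by the
lexicographically largest elements of the corresponding slice of `Y`. -/
def compress (Y : Finset (ι →₀ ℕ)) (i : ι) (A : Finset (ι →₀ ℕ)) : Finset (ι →₀ ℕ) :=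
  {u ∈ Y | u ∈ lexTop (slice i (u i) Y) #(slice i (u i) A)}

theorem mem_raisedSlice :
    v ∈ raisedSlice i t Y ↔ ∃ u ∈ Y, u i + 1 = t ∧ u + Finsupp.single i 1 = v := by
  simp [raisedSlice, and_assoc]

theorem card_le_card_of_slice (hAB : ∀ t, #(slice i t A) ≤ #(slice i t B)) : #A ≤ #B := by
  have hmem : ∀ Y ⊆ A ∪ B, ∀ u ∈ Y, u i ∈ (A ∪ B).image (· i) := fun Y hY u hu ↦
    Finset.mem_image_of_mem (· i) (hY hu)
  rw [Finset.card_eq_sum_card_fiberwise (hmem A Finset.subset_union_left),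
    Finset.card_eq_sum_card_fiberwise (hmem B Finset.subset_union_right)]
  exact Finset.sum_le_sum fun t _ ↦ hAB t

theorem card_raisedSlice_congr (hAB : ∀ t, #(slice i t A) = #(slice i t B)) :
    #(raisedSlice i t A) = #(raisedSlice i t B) := by
  have hcard : ∀ Y, #(raisedSlice i t Y) = #{u ∈ Y | u i + 1 = t} := fun Y ↦
    Finset.card_image_of_injective _ (add_left_injective _)
  rw [hcard, hcard]
  cases t with
  | zero => simp
  | succ t => simpa [slice] using hAB t

theorem compress_subset : compress Y i A ⊆ Y := Finset.filter_subset _ _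

theorem slice_compress : slice i t (compress Y i A) = lexTop (slice i t Y) #(slice i t A) := by
  ext u
  refine ⟨fun hu ↦ ?_, fun hu ↦ ?_⟩
  · obtain ⟨huC, rfl⟩ := mem_slice.1 hu
    exact (Finset.mem_filter.1 huC).2
  · obtain ⟨huY, rfl⟩ := mem_slice.1 (lexTop_subset hu)
    exact mem_slice.2 ⟨Finset.mem_filter.2 ⟨huY, hu⟩, rfl⟩

theorem card_slice_compress (hA : A ⊆ Y) : #(slice i t (compress Y i A)) = #(slice i t A) := by
  rw [slice_compress, card_lexTop (Finset.card_le_card (slice_mono hA))]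

theorem card_compress (hA : A ⊆ Y) : #(compress Y i A) = #A :=
  (card_le_card_of_slice fun _ ↦ (card_slice_compress hA).le).antisymm
    (card_le_card_of_slice fun _ ↦ (card_slice_compress hA).ge)

theorem mem_compress_of_le (hv : v ∈ compress Y i A) (hu : u ∈ Y) (hi : u i = v i)
    (hvu : toLex v ≤ toLex u) : u ∈ compress Y i A := by
  have hv' : v ∈ slice i (v i) (compress Y i A) := mem_slice.2 ⟨hv, rfl⟩
  rw [slice_compress] at hv'
  have hu' := mem_lexTop_of_le hv' (mem_slice.2 ⟨hu, hi⟩) hvu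
  rw [← slice_compress] at hu'
  exact (mem_slice.1 hu').1

theorem exists_toLex_le_mem_compress (hA : A ⊆ Y) (hu : u ∈ A \ compress Y i A) :
    ∃ v ∈ compress Y i A \ A, toLex u ≤ toLex v := by
  obtain ⟨huA, hu⟩ := Finset.mem_sdiff.1 hu
  have hne : (slice i (u i) (compress Y i A) \ slice i (u i) A).Nonempty := by
    rw [← Finset.card_pos, Finset.card_sdiff_comm (card_slice_compress hA), Finset.card_pos]
    exact ⟨u, Finset.mem_sdiff.2 ⟨mem_slice.2 ⟨huA, rfl⟩, fun h ↦ hu (mem_slice.1 h).1⟩⟩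
  obtain ⟨v, hv⟩ := hne
  obtain ⟨hv, hvA⟩ := Finset.mem_sdiff.1 hv
  obtain ⟨hv, hvi⟩ := mem_slice.1 hv
  refine ⟨v, Finset.mem_sdiff.2 ⟨hv, fun h ↦ hvA (mem_slice.2 ⟨h, hvi⟩)⟩, ?_⟩
  exact le_of_not_ge fun hvu ↦ hu (mem_compress_of_le hv (hA huA) hvi.symm hvu)

end Compression

section CompressionShadow

variable {ι : Type*} [Fintype ι] [LinearOrder ι]

/-- The Clements–Lindström inequality in the box between `l` and `h`: lexicographic segments have
the smallest upper shadows. -/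
def SegmentsMinimizeShadow (l h : ι → ℕ) : Prop :=
  ∀ (d : ℕ) (A S : Finset (ι →₀ ℕ)), A ⊆ box l h d → IsLexSegment l h d S → #S ≤ #A →
    #(upShadow h S) ≤ #(upShadow h A)

variable {l h : ι → ℕ} {d t : ℕ} {A : Finset (ι →₀ ℕ)} {i : ι}

theorem slice_box (hl : l i ≤ t) (hh : t ≤ h i) :
    slice i t (box l h d) = box (Function.update l i t) (Function.update h i t) d := by
  ext u
  rw [mem_slice, mem_box, mem_box, and_right_comm]
  refine and_congr_left' ⟨fun ⟨hu, ht⟩ j ↦ ?_, fun hu ↦ ?_⟩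
  · rcases eq_or_ne j i with rfl | hji
    · simp [ht]
    · simpa [hji] using hu j
  · have ht : u i = t := by
      have := hu i
      simp only [Function.update_self] at this
      omega
    refine ⟨fun j ↦ ?_, ht⟩
    rcases eq_or_ne j i with rfl | hji
    · omega
    · simpa [hji] using hu j

theorem slice_upShadow (hh : t ≤ h i) :
    slice i t (upShadow h A) =
      upShadow (Function.update h i t) (slice i t A) ∪ raisedSlice i t A := by
  ext y
  rw [Finset.mem_union, mem_slice, mem_upShadow, mem_upShadow, mem_raisedSlice]
  constructor
  · rintro ⟨⟨u, hu, j, hj, rfl⟩, ht⟩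
    rcases eq_or_ne j i with rfl | hji
    · exact .inr ⟨u, hu, by simpa using ht, rfl⟩
    · refine .inl ⟨u, mem_slice.2 ⟨hu, ?_⟩, j, by rwa [Function.update_of_ne hji], rfl⟩
      simpa [Finsupp.single_eq_of_ne hji.symm] using ht
  · rintro (⟨u, hu, j, hj, rfl⟩ | ⟨u, hu, ht, rfl⟩)
    · obtain ⟨huA, rfl⟩ := mem_slice.1 hu
      rcases eq_or_ne j i with rfl | hji
      · simp at hj
      · rw [Function.update_of_ne hji] at hj
        exact ⟨⟨u, huA, j, hj, rfl⟩, by simp [Finsupp.single_eq_of_ne hji.symm]⟩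
    · exact ⟨⟨u, hu, i, by omega, rfl⟩, by simpa using ht⟩

theorem isLexSegment_slice_compress (hl : l i ≤ t) (hh : t ≤ h i) :
    IsLexSegment (Function.update l i t) (Function.update h i t) d
      (slice i t (compress (box l h d) i A)) := by
  rw [slice_compress, slice_box hl hh]
  exact isLexSegment_lexTop _ _ _ _

theorem isLexSegment_raisedSlice_compress (hl : l i ≤ t) (hh : t ≤ h i) :
    IsLexSegment (Function.update l i t) (Function.update h i t) (d + 1)
      (raisedSlice i t (compress (box l h d) i A)) := by
  refine ⟨fun v hv ↦ ?_, fun v hv w hw hvw ↦ ?_⟩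
  · obtain ⟨u, hu, ht, rfl⟩ := mem_raisedSlice.1 hv
    rw [← slice_box hl hh]
    exact mem_slice.2 ⟨add_single_mem_box (compress_subset hu) (by omega), by simpa using ht⟩
  · obtain ⟨u, hu, ht, rfl⟩ := mem_raisedSlice.1 hv
    rw [← slice_box hl hh] at hw
    obtain ⟨hw, hwi⟩ := mem_slice.1 hw
    have hlu := le_of_mem_box (compress_subset hu) i
    obtain ⟨z, hz, rfl⟩ := exists_add_single_of_mem_box (j := i) hw (by omega)
    have hzi : z i + 1 = t := by simpa using hwi
    rw [toLex_add, toLex_add, add_le_add_iff_right] at hvw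
    exact mem_raisedSlice.2 ⟨z, mem_compress_of_le hu hz (by omega) hvw, hzi, rfl⟩

theorem card_upShadow_compress_le (hA : A ⊆ box l h d)
    (ih : ∀ t, SegmentsMinimizeShadow (Function.update l i t) (Function.update h i t)) :
    #(upShadow h (compress (box l h d) i A)) ≤ #(upShadow h A) := by
  refine card_le_card_of_slice (i := i) fun t ↦ ?_
  rcases (slice i t (upShadow h (compress (box l h d) i A))).eq_empty_or_nonempty with he | ⟨y, hy⟩
  · rw [he, Finset.card_empty]
    exact Nat.zero_le _
  have hyB := upShadow_subset_box compress_subset (mem_slice.1 hy).1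
  have hl : l i ≤ t := (le_of_mem_box hyB i).trans_eq (mem_slice.1 hy).2
  have hh : t ≤ h i := (mem_slice.1 hy).2.ge.trans (apply_le_of_mem_box hyB i)
  have hseg := isLexSegment_slice_compress (A := A) (d := d) hl hh
  rw [slice_upShadow hh, slice_upShadow hh]
  rcases hseg.upShadow.subset_or_subset (isLexSegment_raisedSlice_compress hl hh) with hsub | hsub
  · rw [Finset.union_eq_right.2 hsub, card_raisedSlice_congr fun _ ↦ card_slice_compress hA]
    exact Finset.card_le_card Finset.subset_union_right
  · rw [Finset.union_eq_left.2 hsub]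
    have hA' : slice i t A ⊆ box (Function.update l i t) (Function.update h i t) d :=
      (slice_mono hA).trans_eq (slice_box hl hh)
    exact (ih t d _ _ hA' hseg (card_slice_compress hA).le).trans
      (Finset.card_le_card Finset.subset_union_left)

end CompressionShadow

section Maximal

variable {ι : Type*} [LinearOrder ι]

theorem exists_colex_maximal {Y : Finset (ι →₀ ℕ)} {P : Finset (ι →₀ ℕ) → Prop}
    (hP : ∃ A ⊆ Y, P A) :
    ∃ B ⊆ Y, P B ∧ ∀ C ⊆ Y, P C → (∀ x ∈ B \ C, ∃ y ∈ C \ B, toLex x ≤ toLex y) → C = B := by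
  classical
  let φ : Finset (ι →₀ ℕ) → Colex (Finset (Lex (ι →₀ ℕ))) :=
    fun B ↦ toColex (B.map toLex.toEmbedding)
  have hφ : ∀ {B C}, φ B ≤ φ C ↔ ∀ x ∈ B \ C, ∃ y ∈ C \ B, toLex x ≤ toLex y := by
    intro B C
    simp [φ, Finset.Colex.toColex_le_toColex, and_assoc]
  obtain ⟨A, hA, hPA⟩ := hP
  obtain ⟨B, hB, hmax⟩ := Finset.exists_max_image {A ∈ Y.powerset | P A} φ ⟨A, by simp [hA, hPA]⟩
  simp only [Finset.mem_filter, Finset.mem_powerset] at hB hmax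
  refine ⟨B, hB.1, hB.2, fun C hC hPC hBC ↦ ?_⟩
  have heq := (hmax C ⟨hC, hPC⟩).antisymm (hφ.2 hBC)
  simpa [φ] using heq

end Maximal

section Exchange

variable {ι : Type*} [Fintype ι] [LinearOrder ι]

/-- `A` is compressed in the directions of all free coordinates of the box, that is, the
coordinates `i` with `l i < h i`. -/
def IsCompressed (l h : ι → ℕ) (d : ℕ) (A : Finset (ι →₀ ℕ)) : Prop :=
  ∀ i, l i < h i → ∀ v ∈ A, ∀ u ∈ box l h d, u i = v i → toLex v ≤ toLex u → u ∈ A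

variable {l h l' h' : ι → ℕ} {d k s t : ℕ} {u v w x y : ι →₀ ℕ} {A B S : Finset (ι →₀ ℕ)}
  {a b i j q r : ι}

theorem apply_eq_of_mem_box (hu : u ∈ box l h d) (hv : v ∈ box l h d) (hi : ¬ l i < h i) :
    u i = v i := by
  have := (mem_box.1 hu).1 i
  have := (mem_box.1 hv).1 i
  omega

theorem exists_mem_box_transfer (hv : v ∈ box l h d) (hij : i ≠ j) (hi : v i + k ≤ h i)
    (hj : l j + k ≤ v j) :
    ∃ w ∈ box l h d, w i = v i + k ∧ w j + k = v j ∧ ∀ q, q ≠ i → q ≠ j → w q = v q := by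
  obtain ⟨w, rfl⟩ := exists_add_of_le (Finsupp.single_le_iff.2 (by omega : k ≤ v j))
  have hsingle : ∀ (p q : ι) (c : ℕ), Finsupp.single p c q = if p = q then c else 0 :=
    fun p q c ↦ Finsupp.single_apply
  simp only [Finsupp.add_apply, hsingle, hij.symm, if_true, if_false, zero_add] at hi hj
  refine ⟨w + Finsupp.single i k, mem_box.2 ⟨fun q ↦ ?_, ?_⟩, ?_, ?_, fun q hqi hqj ↦ ?_⟩
  · have := (mem_box.1 hv).1 q
    simp only [Finsupp.add_apply, hsingle] at this ⊢
    grind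
  · rw [← sum_eq_of_mem_box hv]
    simp [Finset.sum_add_distrib, add_comm]
  · simp [hsingle, hij.symm]
  · simp [hsingle, hij, add_comm]
  · simp [hsingle, hqi.symm, hqj.symm]

theorem exists_mem_box_apply_eq (hlh : l ≤ h) (hx : x ∈ box l h' d) (hy : y ∈ box l' h d)
    (hij : i ≠ j) (hsx : s ≤ x i) (htx : t ≤ x j) (hys : y i ≤ s) (hyt : y j ≤ t)
    (hs : s ∈ Set.Icc (l i) (h i)) (ht : t ∈ Set.Icc (l j) (h j)) :
    ∃ w ∈ box l h d, w i = s ∧ w j = t := by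
  let lo := Function.update (Function.update l i s) j t
  let hi := Function.update (Function.update h i s) j t
  have hbounds : ∀ q, l q ≤ lo q ∧ lo q ≤ hi q ∧ hi q ≤ h q ∧ lo q ≤ x q ∧ y q ≤ hi q := fun q ↦ by
    have : l q ≤ h q := hlh q
    have := le_of_mem_box hx q
    have := apply_le_of_mem_box hy q
    have := hs.1; have := hs.2; have := ht.1; have := ht.2
    rcases eq_or_ne q j with rfl | hqj
    · simp [lo, hi]; omega
    rcases eq_or_ne q i with rfl | hqi
    · simp [lo, hi, hqj]; omega
    · simp [lo, hi, hqj, hqi]; omega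
  have hle : ∑ q, lo q ≤ d :=
    (Finset.sum_le_sum fun q _ ↦ (hbounds q).2.2.2.1).trans_eq (sum_eq_of_mem_box hx)
  have hge : d ≤ ∑ q, hi q :=
    (sum_eq_of_mem_box hy).ge.trans (Finset.sum_le_sum fun q _ ↦ (hbounds q).2.2.2.2)
  obtain ⟨w, hw⟩ := box_nonempty (fun q ↦ (hbounds q).2.1) hle hge
  have hwi := (mem_box.1 hw).1
  refine ⟨w, mem_box.2 ⟨fun q ↦ ?_, sum_eq_of_mem_box hw⟩, ?_, ?_⟩
  · exact ⟨(hbounds q).1.trans (hwi q).1, (hwi q).2.trans (hbounds q).2.2.1⟩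
  · simpa [lo, hi, hij, le_antisymm_iff, and_comm] using hwi i
  · simpa [lo, hi, le_antisymm_iff, and_comm] using hwi j

theorem IsCompressed.not_between (hA : IsCompressed l h d A) (hv : v ∈ A) (hu : u ∈ box l h d)
    (huA : u ∉ A) (hi : l i < h i) (hj : l j < h j) (hw : w ∈ box l h d) (hwi : w i = v i)
    (hwj : w j = u j) (hvw : toLex v ≤ toLex w) (hwu : toLex w ≤ toLex u) : False :=
  huA (hA j hj w (hA i hi v hv w hw hwi hvw) u hu hwj.symm hwu)

theorem IsCompressed.apply_ne (hA : IsCompressed l h d A) (hAbox : A ⊆ box l h d) (hv : v ∈ A)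
    (hu : u ∈ box l h d) (huA : u ∉ A) (hvu : toLex v < toLex u) (hi : l i < h i) : v i ≠ u i :=
  fun hi' ↦ hA.not_between hv hu huA hi hi (hAbox hv) rfl hi' le_rfl hvu.le

theorem IsCompressed.apply_first_lt (hA : IsCompressed l h d A) (hAbox : A ⊆ box l h d)
    (hv : v ∈ A) (hu : u ∈ box l h d) (huA : u ∉ A) (hvu : toLex v < toLex u) (ha : l a < h a)
    (hfirst : ∀ q, l q < h q → a ≤ q) : v a < u a := by
  obtain ⟨p, hp, hlt⟩ := toLex_lt_toLex.1 hvu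
  have hpfree : l p < h p := by
    by_contra hp'
    exact hlt.ne (apply_eq_of_mem_box (hAbox hv) hu hp')
  obtain rfl | hap := (hfirst p hpfree).eq_or_lt
  · exact hlt
  · exact absurd (hp a hap) (hA.apply_ne hAbox hv hu huA hvu ha)

theorem IsCompressed.apply_second_lt (hA : IsCompressed l h d A) (hAbox : A ⊆ box l h d)
    (hv : v ∈ A) (hu : u ∈ box l h d) (huA : u ∉ A) (hvu : toLex v < toLex u)
    (ha : l a < h a) (hb : l b < h b) (hab : a < b)
    (hfirst : ∀ q, l q < h q → q = a ∨ b ≤ q) : u b < v b := by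
  have hva : v a < u a := hA.apply_first_lt hAbox hv hu huA hvu ha fun q hq ↦
    (hfirst q hq).elim ge_of_eq hab.le.trans
  have hvbox := hAbox hv
  refine lt_of_not_ge fun hle ↦ ?_
  have hvb : v b < u b := hle.lt_of_ne (hA.apply_ne hAbox hv hu huA hvu hb)
  have hlh : l ≤ h := fun q ↦ (le_of_mem_box hu q).trans (apply_le_of_mem_box hu q)
  obtain ⟨w, hw, hwa, hwb⟩ := exists_mem_box_apply_eq hlh hu hvbox hab.ne hva.le le_rfl le_rfl hle
    ((mem_box.1 hvbox).1 a) ((mem_box.1 hu).1 b)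
  have hwq : ∀ q < b, w q = v q := fun q hq ↦ by
    rcases eq_or_ne q a with rfl | hqa
    · exact hwa
    · exact apply_eq_of_mem_box hw hvbox fun hfree ↦
        (hfirst q hfree).elim hqa hq.not_ge
  refine hA.not_between hv hu huA ha hb hw hwa hwb (toLex_lt_of_le_of_lt (p := b)
    (fun q hq ↦ (hwq q hq).ge) (by omega)).le (toLex_lt_of_le_of_lt (p := a) (fun q hq ↦ ?_)
    (by omega)).le
  refine (apply_eq_of_mem_box hw hu fun hfree ↦ ?_).le
  exact (hfirst q hfree).elim hq.ne (hab.trans' hq).not_ge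

end Exchange

section CompressedExchange

variable {ι : Type*} [Fintype ι] [LinearOrder ι]
variable {l h : ι → ℕ} {d : ℕ} {u v w x : ι →₀ ℕ} {A : Finset (ι →₀ ℕ)} {a b q r : ι}

theorem exists_mem_box_le_of_ne (hu : u ∈ box l h d) (hx : x ∈ box l h d) (har : a ≠ r)
    (hxa : x a = u a) (hr : u r ≤ x r) :
    ∃ w ∈ box l h d, w a = u a ∧ w r = x r ∧ ∀ q ≠ r, w q ≤ u q := by
  have hu' : u ∈ box l (Function.update u r (x r)) d := by
    refine mem_box.2 ⟨fun q ↦ ⟨le_of_mem_box hu q, ?_⟩, sum_eq_of_mem_box hu⟩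
    rcases eq_or_ne q r with rfl | hqr
    · simpa using hr
    · simp [hqr]
  have hupdate : ∀ q, Function.update u r (x r) q ≤ h q := fun q ↦ by
    rcases eq_or_ne q r with rfl | hqr
    · simpa using apply_le_of_mem_box hx q
    · simpa [hqr] using apply_le_of_mem_box hu q
  obtain ⟨w, hw, hwa, hwr⟩ := exists_mem_box_apply_eq
    (fun q ↦ (le_of_mem_box hu' q).trans (apply_le_of_mem_box hu' q)) hx hu' har hxa.ge le_rfl
    le_rfl hr ⟨le_of_mem_box hu a, apply_le_of_mem_box hu' a⟩ ⟨le_of_mem_box hx r, by simp⟩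
  refine ⟨w, mem_box.2 ⟨fun q ↦ ⟨le_of_mem_box hw q, (apply_le_of_mem_box hw q).trans (hupdate q)⟩,
    sum_eq_of_mem_box hw⟩, hwa, hwr, fun q hqr ↦ ?_⟩
  simpa [hqr] using apply_le_of_mem_box hw q

theorem toLex_le_of_forall_le_of_ne (hw : w ∈ box l h d) (hu : u ∈ box l h d)
    (hlast : ∀ q, l q < h q → q ≤ r) (hle : ∀ q ≠ r, w q ≤ u q) : toLex w ≤ toLex u := by
  by_cases hex : ∃ q < r, w q < u q
  · obtain ⟨q, hqr, hq⟩ := hex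
    exact (toLex_lt_of_le_of_lt (fun p hp ↦ hle p (hp.trans hqr).ne) hq).le
  · push Not at hex
    have heq : ∀ q ≠ r, w q = u q := fun q hqr ↦ by
      rcases hqr.lt_or_gt with hlt | hgt
      · exact (hle q hqr).antisymm (hex q hlt)
      · exact apply_eq_of_mem_box hw hu fun hq ↦ (hlast q hq).not_gt hgt
    refine (congrArg toLex ?_).le
    rcases le_total (w r) (u r) with hr | hr
    · exact eq_of_le_of_mem_box hw hu fun q ↦ (eq_or_ne q r).elim (· ▸ hr) fun hq ↦ (heq q hq).le
    · exact (eq_of_le_of_mem_box hu hw fun q ↦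
        (eq_or_ne q r).elim (· ▸ hr) fun hq ↦ (heq q hq).ge).symm

theorem IsCompressed.apply_last_lt (hA : IsCompressed l h d A) (hAbox : A ⊆ box l h d)
    (hv : v ∈ A) (hu : u ∈ box l h d) (huA : u ∉ A) (hvu : toLex v < toLex u)
    (ha : l a < h a) (hb : l b < h b) (hr : l r < h r) (hab : a < b) (hbr : b < r)
    (hfirst : ∀ q, l q < h q → q = a ∨ b ≤ q) (hlast : ∀ q, l q < h q → q ≤ r) : v r < u r := by
  have hva : v a < u a := hA.apply_first_lt hAbox hv hu huA hvu ha fun q hq ↦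
    (hfirst q hq).elim ge_of_eq hab.le.trans
  have hvb : u b < v b := hA.apply_second_lt hAbox hv hu huA hvu ha hb hab hfirst
  have hvbox := hAbox hv
  have har : a ≠ r := (hab.trans hbr).ne
  have heq : ∀ w ∈ box l h d, ∀ q < a, v q = w q ∧ w q = u q := fun w hw q hq ↦ by
    have hfree : ¬ l q < h q := fun hfree ↦ (hfirst q hfree).elim hq.ne (hab.trans' hq).not_ge
    exact ⟨apply_eq_of_mem_box hvbox hw hfree, apply_eq_of_mem_box hw hu hfree⟩
  have hlb := le_of_mem_box hu b
  have hua := apply_le_of_mem_box hu a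
  refine lt_of_not_ge fun hru ↦ ?_
  rcases lt_or_ge (v b - u b) (u a - v a) with hlt | hge
  · obtain ⟨w, hw, hwa, hwb, hwq⟩ := exists_mem_box_transfer (k := v b - u b) hvbox hab.ne
      (by omega) (by omega)
    exact hA.not_between hv hu huA hr hb hw (hwq r har.symm hbr.ne') (by omega)
      (toLex_lt_of_le_of_lt (p := a) (fun q hq ↦ (heq w hw q hq).1.le) (by omega)).le
      (toLex_lt_of_le_of_lt (p := a) (fun q hq ↦ (heq w hw q hq).2.le) (by omega)).le
  · obtain ⟨x, hx, hxa, -, hxq⟩ := exists_mem_box_transfer (k := u a - v a) hvbox hab.ne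
      (by omega) (by omega)
    have hxr : x r = v r := hxq r har.symm hbr.ne'
    obtain ⟨w, hw, hwa, hwr, hwu⟩ :=
      exists_mem_box_le_of_ne hu hx har (by omega) (hru.trans_eq hxr.symm)
    exact hA.not_between hv hu huA hr ha hw (hwr.trans hxr) hwa
      (toLex_lt_of_le_of_lt (p := a) (fun q hq ↦ (heq w hw q hq).1.le) (by omega)).le
      (toLex_le_of_forall_le_of_ne hw hu hlast hwu)

theorem upShadow_insert_erase_subset (hAbox : A ⊆ box l h d) (hv : v ∈ A)
    (hmin : ∀ x ∈ A, toLex v ≤ toLex x) (hu : u ∈ box l h d)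
    (hmax : ∀ w ∈ box l h d, toLex u < toLex w → w ∈ A) (hvu : toLex v < toLex u)
    (hlast : ∀ q, l q < h q → q ≤ r) (hr : v r < u r) :
    upShadow h (insert u (A.erase v)) ⊆
      insert (u + Finsupp.single r 1) ((upShadow h A).erase (v + Finsupp.single r 1)) := by
  intro y hy
  obtain ⟨x, hx, q, hq, rfl⟩ := mem_upShadow.1 hy
  rcases Finset.mem_insert.1 hx with rfl | hx
  · have hqfree : q ≤ r := hlast q ((le_of_mem_box hu q).trans_lt hq)
    rcases hqfree.eq_or_lt with rfl | hqr
    · exact Finset.mem_insert_self _ _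
    refine Finset.mem_insert_of_mem (Finset.mem_erase.2 ⟨add_single_ne_of_toLex_lt hvu hqfree, ?_⟩)
    obtain ⟨w, hw, hwy⟩ := exists_add_single_of_mem_box (j := r) (add_single_mem_box hu hq)
      (by simpa [hqr.ne] using (le_of_mem_box (hAbox hv) r).trans_lt hr)
    have hxw : toLex x < toLex w := by
      have hlt : toLex (x + Finsupp.single r 1) < toLex (w + Finsupp.single r 1) := by
        rw [hwy, toLex_add, toLex_add]
        exact add_lt_add_right (Finsupp.Lex.single_lt_iff.2 hqr) _
      simpa only [toLex_add, add_lt_add_iff_right] using hlt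
    rw [← hwy]
    refine add_single_mem_upShadow (hmax w hw hxw) ?_
    have hxr := apply_le_of_mem_box (add_single_mem_box hu hq) r
    rw [← hwy] at hxr
    simpa using hxr
  · obtain ⟨hxv, hxA⟩ := Finset.mem_erase.1 hx
    have hvx : toLex v < toLex x := (hmin x hxA).lt_of_ne fun h ↦ hxv (toLex_inj.1 h).symm
    have hqfree : q ≤ r := hlast q ((le_of_mem_box (hAbox hxA) q).trans_lt hq)
    exact Finset.mem_insert_of_mem (Finset.mem_erase.2
      ⟨add_single_ne_of_toLex_lt hvx hqfree, add_single_mem_upShadow hxA hq⟩)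

theorem card_upShadow_insert_erase_le (hAbox : A ⊆ box l h d) (hv : v ∈ A)
    (hmin : ∀ x ∈ A, toLex v ≤ toLex x) (hu : u ∈ box l h d)
    (hmax : ∀ w ∈ box l h d, toLex u < toLex w → w ∈ A) (hvu : toLex v < toLex u)
    (hlast : ∀ q, l q < h q → q ≤ r) (hr : v r < u r) :
    #(upShadow h (insert u (A.erase v))) ≤ #(upShadow h A) := by
  have hmem : v + Finsupp.single r 1 ∈ upShadow h A :=
    add_single_mem_upShadow hv (hr.trans_le (apply_le_of_mem_box hu r))
  calc #(upShadow h (insert u (A.erase v)))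
      ≤ #((upShadow h A).erase (v + Finsupp.single r 1)) + 1 :=
        (Finset.card_le_card
          (upShadow_insert_erase_subset hAbox hv hmin hu hmax hvu hlast hr)).trans
          (Finset.card_insert_le _ _)
    _ = #(upShadow h A) := Finset.card_erase_add_one hmem

end CompressedExchange

section ClementsLindstrom

variable {ι : Type*} [Fintype ι] [LinearOrder ι]
variable {l h : ι → ℕ} {d : ℕ} {u v x y : ι →₀ ℕ} {A S : Finset (ι →₀ ℕ)} {i j q : ι}

theorem exists_isCompressed_card_upShadow_le (hA : A ⊆ box l h d)
    (ih : ∀ i, l i < h i →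
      ∀ t, SegmentsMinimizeShadow (Function.update l i t) (Function.update h i t)) :
    ∃ B ⊆ box l h d, #B = #A ∧ #(upShadow h B) ≤ #(upShadow h A) ∧ IsCompressed l h d B ∧
      ∀ C ⊆ box l h d, #C = #B → #(upShadow h C) ≤ #(upShadow h B) →
        (∀ x ∈ B \ C, ∃ y ∈ C \ B, toLex x ≤ toLex y) → C = B := by
  obtain ⟨B, hB, ⟨hcard, hshadow⟩, hmax⟩ := exists_colex_maximal
    (P := fun B ↦ #B = #A ∧ #(upShadow h B) ≤ #(upShadow h A)) ⟨A, hA, rfl, le_rfl⟩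
  have hmax' : ∀ C ⊆ box l h d, #C = #B → #(upShadow h C) ≤ #(upShadow h B) →
      (∀ x ∈ B \ C, ∃ y ∈ C \ B, toLex x ≤ toLex y) → C = B := fun C hC hCB hCs ↦
    hmax C hC ⟨hCB.trans hcard, hCs.trans hshadow⟩
  refine ⟨B, hB, hcard, hshadow, fun i hi v hv u hu huv hvu ↦ ?_, hmax'⟩
  have hcompress : compress (box l h d) i B = B :=
    hmax' _ compress_subset (card_compress hB) (card_upShadow_compress_le hB (ih i hi))
      fun x hx ↦ exists_toLex_le_mem_compress hB hx
  rw [← hcompress] at hv ⊢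
  exact mem_compress_of_le hv hu huv hvu

theorem isLexSegment_of_maximal {a b r : ι} (hA : IsCompressed l h d A) (hAbox : A ⊆ box l h d)
    (hmax : ∀ B ⊆ box l h d, #B = #A → #(upShadow h B) ≤ #(upShadow h A) →
      (∀ x ∈ A \ B, ∃ y ∈ B \ A, toLex x ≤ toLex y) → B = A)
    (ha : l a < h a) (hb : l b < h b) (hr : l r < h r) (hab : a < b) (hbr : b < r)
    (hfirst : ∀ q, l q < h q → q = a ∨ b ≤ q) (hlast : ∀ q, l q < h q → q ≤ r) :
    IsLexSegment l h d A := by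
  refine ⟨hAbox, fun v₀ hv₀ u₀ hu₀ hvu₀ ↦ ?_⟩
  by_contra hu₀A
  obtain ⟨v, hv, hvmin⟩ := A.exists_min_image toLex ⟨v₀, hv₀⟩
  obtain ⟨u, hu, humax⟩ := (box l h d \ A).exists_max_image toLex
    ⟨u₀, Finset.mem_sdiff.2 ⟨hu₀, hu₀A⟩⟩
  have hvu : toLex v ≤ toLex u :=
    (hvmin v₀ hv₀).trans (hvu₀.trans (humax u₀ (Finset.mem_sdiff.2 ⟨hu₀, hu₀A⟩)))
  obtain ⟨hu, huA⟩ := Finset.mem_sdiff.1 hu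
  have hvu : toLex v < toLex u := hvu.lt_of_ne fun h ↦ huA (toLex_inj.1 h ▸ hv)
  have hgt : ∀ w ∈ box l h d, toLex u < toLex w → w ∈ A := fun w hw huw ↦ by
    by_contra hwA
    exact (humax w (Finset.mem_sdiff.2 ⟨hw, hwA⟩)).not_gt huw
  have hvr := hA.apply_last_lt hAbox hv hu huA hvu ha hb hr hab hbr hfirst hlast
  have huA' : u ∉ A.erase v := fun h ↦ huA (Finset.mem_of_mem_erase h)
  have hswap : insert u (A.erase v) = A := by
    refine hmax _ (Finset.insert_subset hu ((Finset.erase_subset v A).trans hAbox)) ?_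
      (card_upShadow_insert_erase_le hAbox hv hvmin hu hgt hvu hlast hvr) fun x hx ↦ ?_
    · rw [Finset.card_insert_of_notMem huA', Finset.card_erase_add_one hv]
    · obtain ⟨hxA, hx⟩ := Finset.mem_sdiff.1 hx
      obtain rfl : x = v := by
        by_contra hxv
        exact hx (Finset.mem_insert_of_mem (Finset.mem_erase.2 ⟨hxv, hxA⟩))
      exact ⟨u, Finset.mem_sdiff.2 ⟨Finset.mem_insert_self _ _, huA⟩, hvu.le⟩
  exact huA (hswap ▸ Finset.mem_insert_self _ _)

theorem card_lt_card_upShadow (hij : i < j) (hne : A.Nonempty)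
    (hlt : ∀ x ∈ A, x i < h i ∧ x j < h j) : #A < #(upShadow h A) := by
  obtain ⟨x, hx, hmax⟩ := A.exists_max_image (· i) hne
  have hx' : x + Finsupp.single i 1 ∉ A.image (· + Finsupp.single j 1) := fun hmem ↦ by
    obtain ⟨y, hy, hyx⟩ := Finset.mem_image.1 hmem
    have hyi := DFunLike.congr_fun hyx i
    have := hmax y hy
    simp [hij.ne'] at hyi
    omega
  calc #A = #(A.image (· + Finsupp.single j 1)) :=
        (Finset.card_image_of_injective _ (add_left_injective _)).symm
    _ < #(insert (x + Finsupp.single i 1) (A.image (· + Finsupp.single j 1))) := by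
        rw [Finset.card_insert_of_notMem hx']
        exact Nat.lt_succ_self _
    _ ≤ #(upShadow h A) := Finset.card_le_card <| Finset.insert_subset
        (add_single_mem_upShadow hx (hlt x hx).1) <|
        Finset.image_subset_iff.2 fun y hy ↦ add_single_mem_upShadow hy (hlt y hy).2

section TwoFree

variable (hij : i < j) (hfree : ∀ q, l q < h q → q = i ∨ q = j)

include hij hfree

theorem apply_add_apply_eq_of_mem_box (hx : x ∈ box l h d) (hy : y ∈ box l h d) :
    x i + x j = y i + y j := by
  have hsum : ∀ z : ι →₀ ℕ, z i + z j + ∑ q ∈ (Finset.univ.erase i).erase j, z q = ∑ q, z q :=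
    fun z ↦ by
      rw [← Finset.add_sum_erase Finset.univ z (Finset.mem_univ i),
        ← Finset.add_sum_erase (Finset.univ.erase i) z (by simp [hij.ne'] : j ∈ _), add_assoc]
  have hrest : ∑ q ∈ (Finset.univ.erase i).erase j, x q =
      ∑ q ∈ (Finset.univ.erase i).erase j, y q := Finset.sum_congr rfl fun q hq ↦ by
    simp only [Finset.mem_erase] at hq
    exact apply_eq_of_mem_box hx hy fun hq' ↦ (hfree q hq').elim hq.2.1 hq.1
  have := hsum x
  have := hsum y
  have := (sum_eq_of_mem_box hx).trans (sum_eq_of_mem_box hy).symm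
  omega

theorem eq_of_apply_eq_of_mem_box (hx : x ∈ box l h d) (hy : y ∈ box l h d) (hxy : x i = y i) :
    x = y := by
  have hsum := apply_add_apply_eq_of_mem_box hij hfree hx hy
  refine Finsupp.ext fun q ↦ ?_
  by_cases hq : l q < h q
  · rcases hfree q hq with rfl | rfl <;> omega
  · exact apply_eq_of_mem_box hx hy hq

theorem toLex_le_of_apply_le_of_mem_box (hx : x ∈ box l h d) (hy : y ∈ box l h d)
    (hxy : x i ≤ y i) : toLex x ≤ toLex y := by
  rcases hxy.lt_or_eq with hlt | heq
  · refine (toLex_lt_of_le_of_lt (fun q hq ↦ (apply_eq_of_mem_box hx hy fun hq' ↦ ?_).le) hlt).le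
    exact (hfree q hq').elim hq.ne (hq.trans hij).ne
  · rw [eq_of_apply_eq_of_mem_box hij hfree hx hy heq]

theorem upShadow_subset_of_isLexSegment (hS : IsLexSegment l h d S) (hx : x ∈ S)
    (hmax : ∀ y ∈ S, y i ≤ x i) :
    upShadow h S ⊆ (insert (x + Finsupp.single i 1) (S.image (· + Finsupp.single j 1))).filter
      (· i ≤ h i) := by
  intro z hz
  have hzi := apply_le_of_mem_box (upShadow_subset_box hS.subset hz) i
  obtain ⟨y, hy, q, hq, rfl⟩ := mem_upShadow.1 hz
  refine Finset.mem_filter.2 ⟨Finset.mem_insert.2 ?_, hzi⟩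
  have hybox := hS.subset hy
  have hxbox := hS.subset hx
  rcases hfree q ((le_of_mem_box hybox q).trans_lt hq) with rfl | rfl
  · rcases (hmax y hy).eq_or_lt with heq | hlt
    · exact .inl (by rw [eq_of_apply_eq_of_mem_box hij hfree hybox hxbox heq])
    have hsum := apply_add_apply_eq_of_mem_box hij hfree hybox hxbox
    have hlj := le_of_mem_box hxbox j
    obtain ⟨w, hw, hwy⟩ := exists_add_single_of_mem_box (j := j) (add_single_mem_box hybox hq)
      (by simp [hij.ne]; omega)
    refine .inr (Finset.mem_image.2 ⟨w, hS.mem_of_le y hy w hw ?_, hwy⟩)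
    refine toLex_le_of_apply_le_of_mem_box hij hfree hybox hw ?_
    have hwi : w q = y q + 1 := by simpa [hij.ne'] using DFunLike.congr_fun hwy q
    omega
  · exact .inr (Finset.mem_image_of_mem _ hy)

theorem card_le_card_upShadow (hA : A ⊆ box l h d) (hu : u ∈ box l h d) (huA : u ∉ A) :
    #A ≤ #(upShadow h A) := by
  have hne : ∀ x ∈ A, x i ≠ u i := fun x hx hxu ↦
    huA (eq_of_apply_eq_of_mem_box hij hfree (hA hx) hu hxu ▸ hx)
  have hsum : ∀ x ∈ A, x i + x j = u i + u j := fun x hx ↦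
    apply_add_apply_eq_of_mem_box hij hfree (hA hx) hu
  refine Finset.card_le_card_of_injOn
    (fun x ↦ x + Finsupp.single (if x i < u i then i else j) 1) (fun x hx ↦ ?_)
    fun x hx y hy hxy ↦ ?_
  · refine add_single_mem_upShadow hx ?_
    have := hne x hx
    have := hsum x hx
    split_ifs
    · have := apply_le_of_mem_box hu i
      omega
    · have := apply_le_of_mem_box hu j
      omega
  · refine eq_of_apply_eq_of_mem_box hij hfree (hA hx) (hA hy) ?_
    have := hne x hx
    have := hne y hy
    have hxyi := DFunLike.congr_fun hxy i
    simp only [Finsupp.add_apply, Finsupp.single_apply] at hxyi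
    grind

theorem card_upShadow_le_of_two_free (hle : h i + l j ≤ h j + l i) (hS : IsLexSegment l h d S)
    (hA : A ⊆ box l h d) (hcard : #S ≤ #A) : #(upShadow h S) ≤ #(upShadow h A) := by
  rcases S.eq_empty_or_nonempty with rfl | hSne
  · simp [upShadow]
  rcases hA.eq_or_ssubset with rfl | hAbox
  · exact Finset.card_le_card (upShadow_mono hS.subset)
  obtain ⟨u, hu, huA⟩ := Finset.exists_of_ssubset hAbox
  obtain ⟨p, hp, hmax⟩ := S.exists_max_image (· i) hSne
  have hpbox := hS.subset hp
  have hshadow := upShadow_subset_of_isLexSegment hij hfree hS hp hmax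
  rcases (apply_le_of_mem_box hpbox i).eq_or_lt with hpi | hpi
  · have hsub : upShadow h S ⊆ S.image (· + Finsupp.single j 1) := fun z hz ↦ by
      obtain ⟨hz, hzi⟩ := Finset.mem_filter.1 (hshadow hz)
      refine (Finset.mem_insert.1 hz).resolve_left ?_
      rintro rfl
      simp [hpi] at hzi
    exact (((Finset.card_le_card hsub).trans Finset.card_image_le).trans hcard).trans
      (card_le_card_upShadow hij hfree hA hu huA)
  · have hpj : p j = l j := by
      refine (le_of_mem_box hpbox j).antisymm' (not_lt.1 fun hlt ↦ ?_)
      obtain ⟨w, hw, hwp⟩ := exists_add_single_of_mem_box (j := j)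
        (add_single_mem_box hpbox hpi) (by simpa [hij.ne] using hlt)
      have hwi : w i = p i + 1 := by simpa [hij.ne'] using DFunLike.congr_fun hwp i
      have := hmax w <| hS.mem_of_le p hp w hw <|
        toLex_le_of_apply_le_of_mem_box hij hfree hpbox hw (by omega)
      omega
    have hlt : ∀ x ∈ A, x i < h i ∧ x j < h j := fun x hx ↦ by
      have := apply_add_apply_eq_of_mem_box hij hfree (hA hx) hpbox
      have := le_of_mem_box (hA hx) i
      have := le_of_mem_box (hA hx) j
      omega
    have hAne : A.Nonempty := Finset.card_pos.1 (hSne.card_pos.trans_le hcard)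
    calc #(upShadow h S) ≤ #(S.image (· + Finsupp.single j 1)) + 1 :=
          (Finset.card_le_card (hshadow.trans (Finset.filter_subset _ _))).trans
            (Finset.card_insert_le _ _)
      _ ≤ #S + 1 := Nat.succ_le_succ Finset.card_image_le
      _ ≤ #(upShadow h A) := (Nat.succ_le_succ hcard).trans (card_lt_card_upShadow hij hAne hlt)

end TwoFree

theorem box_subsingleton (hfree : #{i | l i < h i} ≤ 1) (hx : x ∈ box l h d)
    (hy : y ∈ box l h d) : x = y := by
  refine Finsupp.ext fun i ↦ ?_
  have hrest : ∑ q ∈ Finset.univ.erase i, x q = ∑ q ∈ Finset.univ.erase i, y q → x i = y i := by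
    have := (sum_eq_of_mem_box hx).trans (sum_eq_of_mem_box hy).symm
    rw [← Finset.add_sum_erase _ _ (Finset.mem_univ i),
      ← Finset.add_sum_erase _ y (Finset.mem_univ i)] at this
    omega
  by_cases hi : l i < h i
  · refine hrest <| Finset.sum_congr rfl fun q hq ↦ apply_eq_of_mem_box hx hy fun hq' ↦ ?_
    exact Finset.ne_of_mem_erase hq (Finset.card_le_one.1 hfree q (by simpa) i (by simpa))
  · exact apply_eq_of_mem_box hx hy hi

theorem exists_three_free (hcard : 3 ≤ #{i | l i < h i}) :
    ∃ a b r, l a < h a ∧ l b < h b ∧ l r < h r ∧ a < b ∧ b < r ∧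
      (∀ q, l q < h q → q = a ∨ b ≤ q) ∧ ∀ q, l q < h q → q ≤ r := by
  set F : Finset ι := {i | l i < h i} with hF
  have hmem : ∀ q, q ∈ F ↔ l q < h q := fun q ↦ by simp [hF]
  have hne : F.Nonempty := Finset.card_pos.1 (by omega)
  have hmin := F.min'_mem hne
  have hcard' := Finset.card_erase_add_one hmin
  have hne' : (F.erase (F.min' hne)).Nonempty := Finset.card_pos.1 (by omega)
  set a := F.min' hne
  have hb := (F.erase a).min'_mem hne'
  set b := (F.erase a).min' hne'
  have hcard'' := Finset.card_erase_add_one hb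
  obtain ⟨c, hc⟩ : ((F.erase a).erase b).Nonempty := Finset.card_pos.1 (by omega)
  have hbF := Finset.mem_of_mem_erase hb
  have hcF := Finset.mem_of_mem_erase hc
  refine ⟨a, b, F.max' hne, (hmem _).1 hmin, (hmem _).1 hbF, (hmem _).1 (F.max'_mem hne),
    (F.min'_le b hbF).lt_of_ne (Finset.ne_of_mem_erase hb).symm, ?_, fun q hq ↦ ?_,
    fun q hq ↦ F.le_max' q ((hmem q).2 hq)⟩
  · exact ((Finset.min'_le _ c hcF).lt_of_ne (Finset.ne_of_mem_erase hc).symm).trans_le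
      (F.le_max' c (Finset.mem_of_mem_erase hcF))
  · refine or_iff_not_imp_left.2 fun hqa ↦ Finset.min'_le _ q ?_
    exact Finset.mem_erase.2 ⟨hqa, (hmem q).2 hq⟩

/- Induction on the number of free coordinates. Compressing moves points up in the lexicographic
order, so a colexicographically maximal minimizer is compressed; with three free coordinates, a
compressed set that is not a segment could be moved up further by exchanging one point. -/
theorem segmentsMinimizeShadow
    (hside : ∀ i j, i < j → l i < h i → l j < h j → h i + l j ≤ h j + l i) :
    SegmentsMinimizeShadow l h := by
  induction hk : #{i | l i < h i} using Nat.strong_induction_on generalizing l h with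
  | _ k ih =>
  intro d A S hA hS hcard
  rcases lt_or_ge k 3 with hk3 | hk3
  · rcases lt_or_ge k 2 with hk2 | hk2
    · rcases S.eq_empty_or_nonempty with rfl | ⟨s, hs⟩
      · simp [upShadow]
      obtain ⟨x, hx⟩ : A.Nonempty := Finset.card_pos.1 ((Finset.card_pos.2 ⟨s, hs⟩).trans_le hcard)
      refine Finset.card_le_card (upShadow_mono fun z hz ↦ ?_)
      rwa [box_subsingleton (by omega) (hS.subset hz) (hA hx)]
    · obtain ⟨i, j, hij, hfree⟩ := Finset.card_eq_two.1 (hk.trans (by omega : k = 2))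
      wlog hlt : i < j generalizing i j
      · exact this j i hij.symm (hfree.trans (Finset.pair_comm i j))
          (hij.lt_or_gt.resolve_left hlt)
      have hmem : ∀ q, l q < h q ↔ q = i ∨ q = j := by simpa [Finset.ext_iff] using hfree
      exact card_upShadow_le_of_two_free hlt (fun q ↦ (hmem q).1)
        (hside i j hlt ((hmem i).2 (.inl rfl)) ((hmem j).2 (.inr rfl))) hS hA hcard
  · obtain ⟨a, b, r, ha, hb, hr, hab, hbr, hfirst, hlast⟩ := exists_three_free (hk ▸ hk3)
    obtain ⟨B, hB, hBcard, hBshadow, hBcomp, hBmax⟩ := exists_isCompressed_card_upShadow_le hA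
      fun i hi t ↦ by
        have hfree : ∀ q, Function.update l i t q < Function.update h i t q ↔ q ≠ i ∧ l q < h q :=
          fun q ↦ by rcases eq_or_ne q i with rfl | hq <;> simp [*]
        have hssub : ({q | Function.update l i t q < Function.update h i t q} : Finset ι) ⊂
            ({q | l q < h q} : Finset ι) :=
          (Finset.ssubset_iff_of_subset fun q ↦ by simp [hfree]).2
            ⟨i, by simpa using hi, by simp⟩
        refine ih _ (hk ▸ Finset.card_lt_card hssub) (fun p q hpq hp hq ↦ ?_) rfl
        obtain ⟨hpi, hp⟩ := (hfree p).1 hp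
        obtain ⟨hqi, hq⟩ := (hfree q).1 hq
        simpa [hpi, hqi] using hside p q hpq hp hq
    have hBseg := isLexSegment_of_maximal hBcomp hB hBmax ha hb hr hab hbr hfirst hlast
    exact (Finset.card_le_card (upShadow_mono (hS.subset_of_card_le hBseg
      (hcard.trans hBcard.ge)))).trans hBshadow

end ClementsLindstrom

section RegularSequence

variable {R S : Type*} [CommRing R] [CommRing S] {r m k : ℕ} {f : Fin r → R}

/-- The ideal generated by the first `m` elements of the family `f`. -/
def initialSpan (f : Fin r → R) (m : ℕ) : Ideal R := Ideal.span (f '' {j | (j : ℕ) < m})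

/-- The first `m` elements of `f` form a weakly regular sequence: each is a nonzerodivisor modulo
the previous ones. -/
def IsRegularTo (f : Fin r → R) (m : ℕ) : Prop :=
  ∀ i : Fin r, (i : ℕ) < m → ∀ g, f i * g ∈ initialSpan f i → g ∈ initialSpan f i

theorem initialSpan_mono (hmk : m ≤ k) : initialSpan f m ≤ initialSpan f k :=
  Ideal.span_mono (Set.image_mono fun _ hj ↦ lt_of_lt_of_le hj hmk)

theorem initialSpan_zero : initialSpan f 0 = ⊥ := by simp [initialSpan]

theorem apply_mem_initialSpan {i : Fin r} (hi : (i : ℕ) < m) : f i ∈ initialSpan f m :=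
  Ideal.subset_span ⟨i, hi, rfl⟩

theorem mem_initialSpan_succ (hm : m < r) {x : R} :
    x ∈ initialSpan f (m + 1) ↔ ∃ w, x - f ⟨m, hm⟩ * w ∈ initialSpan f m := by
  have hset : f '' {j | (j : ℕ) < m + 1} = insert (f ⟨m, hm⟩) (f '' {j | (j : ℕ) < m}) := by
    rw [← Set.image_insert_eq]
    congr 1
    ext j
    simp [Fin.ext_iff, Nat.le_iff_lt_or_eq, or_comm]
  rw [initialSpan, hset, Ideal.mem_span_insert']
  refine ⟨fun ⟨w, hw⟩ ↦ ⟨-w, ?_⟩, fun ⟨w, hw⟩ ↦ ⟨-w, ?_⟩⟩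
  · rwa [mul_neg, sub_neg_eq_add, mul_comm]
  · rwa [neg_mul, ← sub_eq_add_neg, mul_comm]

theorem map_initialSpan {F : Type*} [FunLike F R S] [RingHomClass F R S] (φ : F) :
    (initialSpan f m).map φ = initialSpan (φ ∘ f) m := by
  rw [initialSpan, Ideal.map_span, ← Set.image_comp, initialSpan]

theorem IsRegularTo.mono (hf : IsRegularTo f k) (hmk : m ≤ k) : IsRegularTo f m :=
  fun i hi ↦ hf i (hi.trans_le hmk)

end RegularSequence

section Hyperplane

variable {K : Type*} [Field K] {n : ℕ}

/-- The equation `xₙ = ∑ cᵢ xᵢ` of a hyperplane not containing the last coordinate axis. -/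
noncomputable def hyperplaneForm (c : Fin n → K) : MvPolynomial (Fin (n + 1)) K :=
  X (Fin.last n) - ∑ i, C (c i) * X i.castSucc

/-- Restriction of polynomials to the hyperplane `hyperplaneForm c = 0`, on which the first `n`
variables are coordinates. -/
noncomputable def restrict (c : Fin n → K) :
    MvPolynomial (Fin (n + 1)) K →ₐ[K] MvPolynomial (Fin n) K :=
  aeval (Fin.snoc (α := fun _ ↦ MvPolynomial (Fin n) K) X (∑ i, C (c i) * X i))

variable (c : Fin n → K)

@[simp]
theorem restrict_X_castSucc (i : Fin n) : restrict c (X i.castSucc) = X i := by simp [restrict]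

@[simp]
theorem restrict_X_last : restrict c (X (Fin.last n)) = ∑ i, C (c i) * X i := by simp [restrict]

@[simp]
theorem restrict_hyperplaneForm : restrict c (hyperplaneForm c) = 0 := by
  simp [hyperplaneForm, ← algebraMap_eq]

theorem restrict_rename (p : MvPolynomial (Fin n) K) :
    restrict c (rename Fin.castSucc p) = p := by
  have hid : (restrict c).comp (rename Fin.castSucc) = AlgHom.id K _ :=
    MvPolynomial.algHom_ext fun i ↦ by simp
  exact DFunLike.congr_fun hid p

theorem restrict_surjective : Function.Surjective (restrict c) :=
  fun p ↦ ⟨rename Fin.castSucc p, restrict_rename c p⟩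

theorem hyperplaneForm_dvd_sub_rename (p : MvPolynomial (Fin (n + 1)) K) :
    hyperplaneForm c ∣ p - rename Fin.castSucc (restrict c p) := by
  have hmk : (Ideal.Quotient.mkₐ K (Ideal.span {hyperplaneForm c})).comp
      ((rename Fin.castSucc).comp (restrict c)) = Ideal.Quotient.mkₐ K _ := by
    refine MvPolynomial.algHom_ext fun i ↦ ?_
    refine Fin.lastCases ?_ (fun j ↦ by simp) i
    refine (Ideal.Quotient.eq.2 (Ideal.mem_span_singleton.2 ?_)).symm
    simp [hyperplaneForm]
  exact Ideal.mem_span_singleton.1 (Ideal.Quotient.eq.1 (DFunLike.congr_fun hmk p).symm)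

variable {c}

theorem restrict_eq_zero_iff {p : MvPolynomial (Fin (n + 1)) K} :
    restrict c p = 0 ↔ hyperplaneForm c ∣ p := by
  refine ⟨fun hp ↦ ?_, fun ⟨q, hq⟩ ↦ by simp [hq]⟩
  simpa [hp] using hyperplaneForm_dvd_sub_rename c p

theorem restrict_mem_map_iff {I : Ideal (MvPolynomial (Fin (n + 1)) K)}
    {p : MvPolynomial (Fin (n + 1)) K} :
    restrict c p ∈ I.map (restrict c) ↔ ∃ v, p - hyperplaneForm c * v ∈ I := by
  refine ⟨fun hp ↦ ?_, fun ⟨v, hv⟩ ↦ by simpa using Ideal.mem_map_of_mem (restrict c) hv⟩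
  obtain ⟨q, hq, hqp⟩ := (Ideal.mem_map_iff_of_surjective _ (restrict_surjective c)).1 hp
  obtain ⟨v, hv⟩ := restrict_eq_zero_iff.1 (show restrict c (p - q) = 0 by simp [hqp])
  exact ⟨v, by rwa [← hv, sub_sub_cancel]⟩

theorem constantCoeff_restrict (p : MvPolynomial (Fin (n + 1)) K) :
    constantCoeff (restrict c p) = constantCoeff p := by
  have hcomp : constantCoeff.comp (restrict c).toRingHom = constantCoeff := by
    refine MvPolynomial.ringHom_ext (fun x ↦ by simp [← algebraMap_eq]) fun i ↦ ?_
    refine Fin.lastCases (by simp) (fun j ↦ by simp) i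
  exact DFunLike.congr_fun hcomp p

variable {r m : ℕ} {f : Fin r → MvPolynomial (Fin (n + 1)) K}

theorem restrict_mem_initialSpan_iff {p : MvPolynomial (Fin (n + 1)) K} :
    restrict c p ∈ initialSpan (restrict c ∘ f) m ↔
      ∃ v, p - hyperplaneForm c * v ∈ initialSpan f m := by
  rw [← map_initialSpan, restrict_mem_map_iff]

theorem isRegularTo_restrict (hf : IsRegularTo f m)
    (hc : ∀ k ≤ m, ∀ g, hyperplaneForm c * g ∈ initialSpan f k → g ∈ initialSpan f k) :
    IsRegularTo (restrict c ∘ f) m := by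
  intro i hi g hg
  obtain ⟨u, rfl⟩ := restrict_surjective c g
  rw [Function.comp_apply, ← map_mul, restrict_mem_initialSpan_iff] at hg
  obtain ⟨v, hv⟩ := hg
  have hcv : hyperplaneForm c * v ∈ initialSpan f (i + 1) := by
    simpa using sub_mem (Ideal.mul_mem_right u _ (apply_mem_initialSpan (Nat.lt_succ_self i)))
      (initialSpan_mono (Nat.le_succ i) hv)
  obtain ⟨w, hw⟩ := (mem_initialSpan_succ i.2).1 (hc _ hi v hcv)
  refine restrict_mem_initialSpan_iff.2 ⟨w, hf i hi _ ?_⟩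
  convert add_mem hv (Ideal.mul_mem_left _ (hyperplaneForm c) hw) using 1
  ring

end Hyperplane

section Socle

variable {K : Type*} [Field K]

/-- No nonzero element of the quotient by `P` is annihilated by all variables. -/
def HasTrivialSocle {σ : Type*} (P : Ideal (MvPolynomial σ K)) : Prop :=
  ∀ u, (∀ j, X j * u ∈ P) → u ∈ P

theorem HasTrivialSocle.exists_X_notMem {σ : Type*} [Finite σ] {P p : Ideal (MvPolynomial σ K)}
    (hP : HasTrivialSocle P) (hp : p ∈ associatedPrimes _ (MvPolynomial σ K ⧸ P)) :
    ∃ j, X j ∉ p := by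
  obtain ⟨hprime, x, rfl⟩ := isAssociatedPrime_iff.1 hp
  obtain ⟨u, rfl⟩ := Ideal.Quotient.mk_surjective x
  have hmem : ∀ y, y ∈ (⊥ : Submodule _ (MvPolynomial σ K ⧸ P)).colon {Ideal.Quotient.mk P u} ↔
      y * u ∈ P := fun y ↦ by
    rw [Submodule.mem_colon_singleton, Submodule.mem_bot, ← Ideal.Quotient.eq_zero_iff_mem, map_mul]
    rfl
  by_contra! hX
  refine hprime.ne_top ((Ideal.eq_top_iff_one _).2 ((hmem 1).2 ?_))
  rw [one_mul]
  exact hP u fun j ↦ (hmem _).1 (hX j)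

variable {n r m : ℕ}

theorem exists_hyperplaneForm_eq_smul {b : Fin (n + 1) → K} (hb : b (Fin.last n) ≠ 0) :
    ∃ c : Fin n → K, ∑ i, b i • X i = C (b (Fin.last n)) * hyperplaneForm c := by
  refine ⟨fun i ↦ -(b i.castSucc / b (Fin.last n)), ?_⟩
  rw [Fin.sum_univ_castSucc, hyperplaneForm, mul_sub, Finset.mul_sum, sub_eq_neg_add,
    ← Finset.sum_neg_distrib, smul_eq_C_mul]
  refine congrArg (· + _) (Finset.sum_congr rfl fun i _ ↦ ?_)
  rw [smul_eq_C_mul, ← mul_assoc, ← C_mul, ← neg_mul, ← C_neg, mul_neg, neg_neg,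
    mul_div_cancel₀ _ hb]

theorem exists_hyperplaneForm_notMem [Infinite K] {s : Set (Ideal (MvPolynomial (Fin (n + 1)) K))}
    (hs : s.Finite) (hX : ∀ p ∈ s, ∃ j, X j ∉ p) :
    ∃ c : Fin n → K, ∀ p ∈ s, hyperplaneForm c ∉ p := by
  classical
  let L := Fintype.linearCombination K (X : Fin (n + 1) → MvPolynomial (Fin (n + 1)) K)
  have hLX : ∀ j, L (Pi.single j 1) = X j := fun j ↦ by simp [L]
  let V (p : Ideal (MvPolynomial (Fin (n + 1)) K)) := (p.restrictScalars K).comap L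
  let W : Subspace K (Fin (n + 1) → K) := LinearMap.ker (LinearMap.proj (Fin.last n))
  have htop : ⊤ ∉ insert W (hs.toFinset.image V) := by
    simp only [Finset.mem_insert, Finset.mem_image, Set.Finite.mem_toFinset, not_or, not_exists,
      not_and]
    refine ⟨fun hW ↦ ?_, fun p hp hpV ↦ ?_⟩
    · have : (Pi.single (Fin.last n) 1 : Fin (n + 1) → K) ∈ W := hW ▸ Submodule.mem_top
      simp [W] at this
    · obtain ⟨j, hj⟩ := hX p hp
      have : Pi.single j 1 ∈ V p := hpV ▸ Submodule.mem_top
      exact hj (hLX j ▸ this)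
  obtain ⟨b, hb⟩ := (Set.ne_univ_iff_exists_notMem _).1
    (Subspace.biUnion_ne_univ_of_top_notMem htop)
  simp only [Set.mem_iUnion, not_exists, Finset.mem_insert, Finset.mem_image, SetLike.mem_coe,
    Set.Finite.mem_toFinset] at hb
  obtain ⟨c, hc⟩ := exists_hyperplaneForm_eq_smul (b := b) fun h0 ↦ hb W (.inl rfl) h0
  refine ⟨c, fun p hp hcp ↦ hb (V p) (.inr ⟨p, hp, rfl⟩) ?_⟩
  exact (hc ▸ Ideal.mul_mem_left _ _ hcp : ∑ i, b i • X i ∈ p)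

theorem exists_hyperplaneForm_regular [Infinite K]
    {s : Set (Ideal (MvPolynomial (Fin (n + 1)) K))} (hs : s.Finite)
    (hsocle : ∀ P ∈ s, HasTrivialSocle P) :
    ∃ c : Fin n → K, ∀ P ∈ s, ∀ g, hyperplaneForm c * g ∈ P → g ∈ P := by
  obtain ⟨c, hc⟩ := exists_hyperplaneForm_notMem
    (s := ⋃ P ∈ s, associatedPrimes _ (MvPolynomial (Fin (n + 1)) K ⧸ P))
    (hs.biUnion fun P _ ↦ associatedPrimes.finite _ _) fun p hp ↦ by
      obtain ⟨P, hP, hp⟩ := Set.mem_iUnion₂.1 hp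
      exact (hsocle P hP).exists_X_notMem hp
  refine ⟨c, fun P hP g hg ↦ by_contra fun hgP ↦ ?_⟩
  have hzero : hyperplaneForm c ∈
      {y | ∃ x : MvPolynomial (Fin (n + 1)) K ⧸ P, x ≠ 0 ∧ y • x = 0} :=
    ⟨Ideal.Quotient.mk P g, by rwa [Ne, Ideal.Quotient.eq_zero_iff_mem],
      Ideal.Quotient.eq_zero_iff_mem.2 hg⟩
  rw [← biUnion_associatedPrimes_eq_zero_divisors] at hzero
  obtain ⟨p, hp, hcp⟩ := Set.mem_iUnion₂.1 hzero
  exact hc p (Set.mem_biUnion hP hp) hcp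

theorem exists_hyperplaneForm_regular_initialSpan [Infinite K]
    {f : Fin r → MvPolynomial (Fin (n + 1)) K}
    (hsocle : ∀ k ≤ m, HasTrivialSocle (initialSpan f k)) :
    ∃ c : Fin n → K, ∀ k ≤ m, ∀ g, hyperplaneForm c * g ∈ initialSpan f k →
      g ∈ initialSpan f k := by
  obtain ⟨c, hc⟩ := exists_hyperplaneForm_regular ((Set.finite_Iic m).image (initialSpan f))
    (by simpa using hsocle)
  exact ⟨c, by simpa using hc⟩

theorem hasTrivialSocle_initialSpan [Infinite K] {f : Fin r → MvPolynomial (Fin n) K} (hm : m ≤ r)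
    (hmn : m < n) (hf0 : ∀ i, constantCoeff (f i) = 0) (hf : IsRegularTo f m) :
    HasTrivialSocle (initialSpan f m) := by
  induction m using Nat.strong_induction_on generalizing n with
  | _ m ih =>
  rcases m with _ | m
  · intro u hu
    have h0 := hu ⟨0, hmn⟩
    rw [initialSpan_zero, Ideal.mem_bot] at h0 ⊢
    exact (mul_eq_zero.1 h0).resolve_left (X_ne_zero _)
  obtain ⟨n, rfl⟩ : ∃ k, n = k + 1 := ⟨n - 1, by omega⟩
  have hfm := hf.mono m.le_succ
  obtain ⟨c, hc⟩ := exists_hyperplaneForm_regular_initialSpan (m := m) fun k hk ↦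
    ih k (by omega) (by omega) (by omega) hf0 (hf.mono (by omega : k ≤ m + 1))
  intro u hu
  choose w hw using fun j ↦ (mem_initialSpan_succ hm).1 (hu j)
  obtain ⟨v, hv⟩ : ∃ v, hyperplaneForm c * u - f ⟨m, hm⟩ * v ∈ initialSpan f m := by
    refine (mem_initialSpan_succ hm).1 ?_
    rw [hyperplaneForm, sub_mul, Finset.sum_mul]
    refine sub_mem (hu _) (Ideal.sum_mem _ fun i _ ↦ ?_)
    rw [mul_assoc]
    exact Ideal.mul_mem_left _ _ (hu _)
  have hXv : ∀ j, X j * v - hyperplaneForm c * w j ∈ initialSpan f m := fun j ↦ by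
    refine hf ⟨m, hm⟩ m.lt_succ_self _ ?_
    convert sub_mem (Ideal.mul_mem_left _ (hyperplaneForm c) (hw j))
      (Ideal.mul_mem_left _ (X j) hv) using 1
    ring
  have hrestrict : restrict c v ∈ initialSpan (restrict c ∘ f) m := by
    refine ih m m.lt_succ_self (f := restrict c ∘ f) (by omega) (by omega)
      (fun i ↦ (constantCoeff_restrict _).trans (hf0 i)) (isRegularTo_restrict hfm hc) _ fun j ↦ ?_
    rw [← restrict_X_castSucc c j, ← map_mul, restrict_mem_initialSpan_iff]
    exact ⟨_, hXv _⟩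
  obtain ⟨w', hw'⟩ := restrict_mem_initialSpan_iff.1 hrestrict
  refine (mem_initialSpan_succ hm).2 ⟨w', hc m le_rfl _ ?_⟩
  convert add_mem hv (Ideal.mul_mem_left _ (f ⟨m, hm⟩) hw') using 1
  ring

end Socle

section LexPlusPowers

variable {ι : Type*} [Fintype ι] [LinearOrder ι] {U V : Set (ι →₀ ℕ)} {u : ι →₀ ℕ} {d : ℕ}

open Classical in
/-- The elements of degree `d` of a set of exponents. -/
noncomputable def degreePart (U : Set (ι →₀ ℕ)) (d : ℕ) : Finset (ι →₀ ℕ) :=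
  {u ∈ Finset.univ.finsuppAntidiag d | u ∈ U}

theorem mem_degreePart : u ∈ degreePart U d ↔ u ∈ U ∧ u.degree = d := by
  simp [degreePart, Finsupp.degree_eq_sum, and_comm]

theorem degreePart_mono (hUV : U ⊆ V) : degreePart U d ⊆ degreePart V d := fun _ hu ↦
  mem_degreePart.2 ((mem_degreePart.1 hu).imp_left fun h ↦ hUV h)

theorem isUpperSet_of_add_single_mem {ι : Type*} {U : Set (ι →₀ ℕ)}
    (hU : ∀ u ∈ U, ∀ i, u + Finsupp.single i 1 ∈ U) : IsUpperSet U := by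
  intro u v huv hu
  obtain ⟨w, rfl⟩ := exists_add_of_le huv
  clear huv
  induction w using Finsupp.induction_linear generalizing u with
  | zero => simpa
  | add v w hv hw => exact add_assoc u v w ▸ hw (hv hu)
  | single i k =>
    induction k with
    | zero => simpa
    | succ k ih => simpa [add_assoc] using hU _ ih i

/-- The exponents of the monomials in the ideal generated by the powers `xᵢ ^ aᵢ`. -/
def powerExponents {ι : Type*} (a : ι → ℕ) : Set (ι →₀ ℕ) := {u | ∃ i, a i ≤ u i}

/-- The exponents that are divisible by some `xᵢ ^ aᵢ` or are among the lexicographically largest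
remaining ones of their degree, as many of these as needed to have `H d` exponents of degree `d`. -/
def lexPlusPowers (a : ι → ℕ) (H : ℕ → ℕ) : Set (ι →₀ ℕ) :=
  powerExponents a ∪
    {u | u ∈ lexTop (box 0 (fun i ↦ a i - 1) u.degree)
      (H u.degree - #(degreePart (powerExponents a) u.degree))}

variable {a : ι → ℕ} {H H' : ℕ → ℕ}

theorem mem_lexPlusPowers : u ∈ lexPlusPowers a H ↔
    u ∈ powerExponents a ∨ u ∈ lexTop (box 0 (fun i ↦ a i - 1) u.degree)
      (H u.degree - #(degreePart (powerExponents a) u.degree)) :=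
  Iff.rfl

theorem lexPlusPowers_mono (hH : H ≤ H') : lexPlusPowers a H ⊆ lexPlusPowers a H' := fun u hu ↦
  mem_lexPlusPowers.2 <| (mem_lexPlusPowers.1 hu).imp_right fun hu ↦
    lexTop_mono (Nat.sub_le_sub_right (hH u.degree) _) hu

theorem mem_reducedBox (ha : ∀ i, 0 < a i) :
    u ∈ box 0 (fun i ↦ a i - 1) d ↔ u ∉ powerExponents a ∧ u.degree = d := by
  rw [mem_box, Finsupp.degree_eq_sum, powerExponents, Set.mem_ofPred_eq, not_exists]
  refine and_congr_left' (forall_congr' fun i ↦ ?_)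
  have := ha i
  simp only [Pi.zero_apply]
  omega

theorem disjoint_reducedBox (ha : ∀ i, 0 < a i) :
    Disjoint (degreePart (powerExponents a) d) (box 0 (fun i ↦ a i - 1) d) :=
  Finset.disjoint_left.2 fun _ hu hu' ↦ ((mem_reducedBox ha).1 hu').1 (mem_degreePart.1 hu).1

theorem degreePart_eq_union (ha : ∀ i, 0 < a i) (hU : powerExponents a ⊆ U) :
    degreePart U d = degreePart (powerExponents a) d ∪
      {u ∈ box 0 (fun i ↦ a i - 1) d | u ∈ degreePart U d} := by
  ext u
  have := @hU u
  simp only [Finset.mem_union, Finset.mem_filter, mem_degreePart, mem_reducedBox ha]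
  tauto

theorem card_degreePart_eq_add (ha : ∀ i, 0 < a i) (hU : powerExponents a ⊆ U) :
    #(degreePart U d) = #(degreePart (powerExponents a) d) +
      #{u ∈ box 0 (fun i ↦ a i - 1) d | u ∈ degreePart U d} := by
  rw [← Finset.card_union_of_disjoint, ← degreePart_eq_union ha hU]
  exact (disjoint_reducedBox ha).mono_right (Finset.filter_subset _ _)

theorem degreePart_lexPlusPowers :
    degreePart (lexPlusPowers a H) d = degreePart (powerExponents a) d ∪
      lexTop (box 0 (fun i ↦ a i - 1) d) (H d - #(degreePart (powerExponents a) d)) := by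
  ext u
  have hdeg : ∀ k, u ∈ lexTop (box 0 (fun i ↦ a i - 1) d) k → u.degree = d := fun k hu ↦
    (Finsupp.degree_eq_sum u).trans (sum_eq_of_mem_box (lexTop_subset hu))
  simp only [Finset.mem_union, mem_degreePart, mem_lexPlusPowers]
  constructor
  · rintro ⟨hu | hu, rfl⟩
    exacts [.inl ⟨hu, rfl⟩, .inr hu]
  · rintro (⟨hu, rfl⟩ | hu)
    · exact ⟨.inl hu, rfl⟩
    · obtain rfl := hdeg _ hu
      exact ⟨.inr hu, rfl⟩

theorem card_degreePart_lexPlusPowers (ha : ∀ i, 0 < a i) (hU : powerExponents a ⊆ U) :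
    #(degreePart (lexPlusPowers a fun d ↦ #(degreePart U d)) d) = #(degreePart U d) := by
  rw [degreePart_lexPlusPowers, Finset.card_union_of_disjoint
    ((disjoint_reducedBox ha).mono_right lexTop_subset), card_degreePart_eq_add ha hU,
    Nat.add_sub_cancel_left, card_lexTop (Finset.card_filter_le _ _)]

theorem isUpperSet_lexPlusPowers (ha : ∀ i, 0 < a i) (hmono : Monotone a) (hU : IsUpperSet U)
    (haU : powerExponents a ⊆ U) :
    IsUpperSet (lexPlusPowers a fun d ↦ #(degreePart U d)) := by
  set h : ι → ℕ := fun i ↦ a i - 1 with hh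
  set A : ℕ → Finset (ι →₀ ℕ) := fun d ↦ {u ∈ box 0 h d | u ∈ degreePart U d}
  set S : ℕ → Finset (ι →₀ ℕ) := fun d ↦ lexTop (box 0 h d) #(A d)
  have hmem : ∀ u, u ∈ lexPlusPowers a (fun d ↦ #(degreePart U d)) ↔
      u ∈ powerExponents a ∨ u ∈ S u.degree := fun u ↦ by
    rw [mem_lexPlusPowers, card_degreePart_eq_add ha haU, Nat.add_sub_cancel_left]
  have hA : ∀ d, A d ⊆ box 0 h d := fun d ↦ Finset.filter_subset _ _
  have hS : ∀ d, #(S d) = #(A d) := fun d ↦ card_lexTop (Finset.card_le_card (hA d))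
  have hCL : SegmentsMinimizeShadow 0 h := segmentsMinimizeShadow fun i j hij _ _ ↦ by
    simpa [hh] using Nat.sub_le_sub_right (hmono hij.le) 1
  have hAup : ∀ d, upShadow h (A d) ⊆ A (d + 1) := fun d y hy ↦ by
    refine Finset.mem_filter.2 ⟨upShadow_subset_box (hA d) hy, ?_⟩
    obtain ⟨u, hu, i, -, rfl⟩ := mem_upShadow.1 hy
    obtain ⟨huU, hud⟩ := mem_degreePart.1 (Finset.mem_filter.1 hu).2
    exact mem_degreePart.2 ⟨hU le_self_add huU, by simp [hud]⟩
  have hSup : ∀ d, upShadow h (S d) ⊆ S (d + 1) := fun d ↦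
    (isLexSegment_lexTop 0 h d _).upShadow.subset_of_card_le (isLexSegment_lexTop _ _ _ _) <|
      (hCL d (A d) (S d) (hA d) (isLexSegment_lexTop 0 h d _) (hS d).le).trans <|
        (Finset.card_le_card (hAup d)).trans (hS (d + 1)).ge
  refine isUpperSet_of_add_single_mem fun u hu i ↦ ?_
  by_cases hi : u i < h i
  · rw [hmem] at hu ⊢
    refine hu.imp (fun ⟨j, hj⟩ ↦ ⟨j, hj.trans (by simp)⟩) fun hu ↦ ?_
    simpa using hSup _ (add_single_mem_upShadow hu hi)
  · refine .inl ⟨i, ?_⟩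
    simp only [hh] at hi
    simp
    omega

end LexPlusPowers

section LeadingExponents

variable {σ K : Type*} [Field K] (m : MonomialOrder σ)

theorem linearIndependent_of_injective_degree {ι : Type*} {v : ι → MvPolynomial σ K}
    (hv : ∀ i, v i ≠ 0) (hinj : Function.Injective fun i ↦ m.degree (v i)) :
    LinearIndependent K v := by
  classical
  refine linearIndependent_iff'.2 fun s g hsum ↦ by_contra fun hg ↦ ?_
  push Not at hg
  obtain ⟨i₀, hi₀, hgi₀⟩ := hg
  obtain ⟨i, hi, hmax⟩ := {i ∈ s | g i ≠ 0}.exists_max_image (fun i ↦ m.toSyn (m.degree (v i)))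
    ⟨i₀, Finset.mem_filter.2 ⟨hi₀, hgi₀⟩⟩
  obtain ⟨his, hgi⟩ := Finset.mem_filter.1 hi
  have hcoeff : coeff (m.degree (v i)) (∑ j ∈ s, g j • v j) =
      g i * coeff (m.degree (v i)) (v i) := by
    rw [coeff_sum, Finset.sum_eq_single_of_mem i his fun j hj hji ↦ ?_, coeff_smul, smul_eq_mul]
    rw [coeff_smul, smul_eq_mul]
    by_cases hgj : g j = 0
    · rw [hgj, zero_mul]
    rw [m.coeff_eq_zero_of_lt, mul_zero]
    exact (hmax j (Finset.mem_filter.2 ⟨hj, hgj⟩)).lt_of_ne fun h ↦ hji (hinj (m.toSyn.injective h))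
  rw [hsum, coeff_zero] at hcoeff
  exact mul_ne_zero hgi (m.coeff_degree_ne_zero_iff.2 (hv i)) hcoeff.symm

variable {m} {W : Submodule K (MvPolynomial σ K)} {D : Finset (σ →₀ ℕ)}

theorem coeff_injective_of_degree_mem (hD : ∀ p ∈ W, p ≠ 0 → m.degree p ∈ D) :
    Function.Injective (LinearMap.pi (fun u : D ↦ (lcoeff K u.1).comp W.subtype)) := by
  refine LinearMap.ker_eq_bot.1 (LinearMap.ker_eq_bot'.2 fun p hp ↦ by_contra fun hne ↦ ?_)
  have hne : p.1 ≠ 0 := fun h ↦ hne (Subtype.ext h)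
  exact m.coeff_degree_ne_zero_iff.2 hne (congrFun hp ⟨_, hD p.1 p.2 hne⟩)

theorem finrank_eq_card_of_degree_mem_iff
    (hD : ∀ u, u ∈ D ↔ ∃ p ∈ W, p ≠ 0 ∧ m.degree p = u) : Module.finrank K W = #D := by
  have hinj := coeff_injective_of_degree_mem fun p hp hp0 ↦ (hD _).2 ⟨p, hp, hp0, rfl⟩
  have : Module.Finite K W := Module.Finite.of_injective _ hinj
  refine le_antisymm ?_ ?_
  · simpa using LinearMap.finrank_le_finrank_of_injective hinj
  · choose p hpW hp0 hdeg using fun u : D ↦ (hD u.1).1 u.2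
    have hp : LinearIndependent K fun u : D ↦ (⟨p u, hpW u⟩ : W) :=
      LinearIndependent.of_comp W.subtype <| linearIndependent_of_injective_degree m hp0
        fun u v huv ↦ Subtype.ext ((hdeg u).symm.trans (huv.trans (hdeg v)))
    simpa using hp.fintype_card_le_finrank

variable (m) in
/-- The exponents of the leading monomials of the nonzero homogeneous elements of `I`. -/
def leadingExponents (I : Ideal (MvPolynomial σ K)) : Set (σ →₀ ℕ) :=
  {u | ∃ p ∈ I, p ≠ 0 ∧ p.IsHomogeneous u.degree ∧ m.degree p = u}

variable {I : Ideal (MvPolynomial σ K)} {u : σ →₀ ℕ}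

theorem mem_leadingExponents : u ∈ leadingExponents m I ↔
    ∃ p ∈ I, p ≠ 0 ∧ p.IsHomogeneous u.degree ∧ m.degree p = u :=
  Iff.rfl

theorem leadingExponents_mono {J : Ideal (MvPolynomial σ K)} (hIJ : I ≤ J) :
    leadingExponents m I ⊆ leadingExponents m J :=
  fun _ ⟨p, hp, h⟩ ↦ ⟨p, hIJ hp, h⟩

theorem mem_leadingExponents_of_monomial_mem (hu : monomial u (1 : K) ∈ I) :
    u ∈ leadingExponents m I := by
  classical
  exact ⟨_, hu, by simp, isHomogeneous_monomial _ rfl, by simp [m.degree_monomial]⟩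

theorem isUpperSet_leadingExponents : IsUpperSet (leadingExponents m I) := by
  classical
  rintro u _ huv ⟨p, hp, hp0, hhom, hdeg⟩
  obtain ⟨w, rfl⟩ := exists_add_of_le huv
  have hw : monomial w (1 : K) ≠ 0 := by simp
  refine ⟨p * monomial w 1, I.mul_mem_right _ hp, mul_ne_zero hp0 hw, ?_, ?_⟩
  · rw [map_add]
    exact hhom.mul (isHomogeneous_monomial _ rfl)
  · rw [m.degree_mul hp0 hw, hdeg, m.degree_monomial, if_neg one_ne_zero]

theorem leadingExponents_span_monomial {U : Set (σ →₀ ℕ)} (hU : IsUpperSet U) :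
    leadingExponents m (Ideal.span ((fun u ↦ monomial u (1 : K)) '' U)) = U := by
  refine Set.Subset.antisymm ?_ fun u hu ↦
    mem_leadingExponents_of_monomial_mem (Ideal.subset_span ⟨u, hu, rfl⟩)
  rintro _ ⟨p, hp, hp0, -, rfl⟩
  obtain ⟨v, hv, hle⟩ := mem_ideal_span_monomial_image.1 hp _ (m.degree_mem_support hp0)
  exact hU hle hv

theorem powerExponents_subset_leadingExponents {a : σ → ℕ} (hI : ∀ i, X i ^ a i ∈ I) :
    powerExponents a ⊆ leadingExponents m I := by
  rintro u ⟨i, hi⟩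
  refine isUpperSet_leadingExponents (Finsupp.single_le_iff.2 hi)
    (mem_leadingExponents_of_monomial_mem ?_)
  rw [← X_pow_eq_monomial]
  exact hI i

end LeadingExponents

section HilbertFunction

variable {K : Type} [Field K] {n : ℕ} {I J : Ideal (MvPolynomial (Fin n) K)}

theorem hilb_eq_card (m : MonomialOrder (Fin n)) (I : Ideal (MvPolynomial (Fin n) K)) (d : ℕ) :
    hilb I d = #(degreePart (leadingExponents m I) d) := by
  refine finrank_eq_card_of_degree_mem_iff (m := m) fun u ↦ ?_
  rw [mem_degreePart, mem_leadingExponents]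
  constructor
  · rintro ⟨⟨p, hp, hp0, hhom, hdeg⟩, rfl⟩
    exact ⟨p, ⟨hp, hhom⟩, hp0, hdeg⟩
  · rintro ⟨p, ⟨hp, hhom⟩, hp0, rfl⟩
    have hd : (m.degree p).degree = d := by
      rw [Finsupp.degree_eq_weight_one]
      exact hhom (m.coeff_degree_ne_zero_iff.2 hp0)
    exact ⟨⟨p, hp, hp0, hd ▸ hhom, rfl⟩, hd⟩

theorem hilb_mono (hIJ : I ≤ J) : hilb I ≤ hilb J := fun d ↦ by
  rw [hilb_eq_card MonomialOrder.lex, hilb_eq_card MonomialOrder.lex]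
  exact Finset.card_le_card (degreePart_mono (leadingExponents_mono hIJ))

end HilbertFunction

section Homogeneous

theorem homogeneousComponent_map {σ τ R : Type*} [CommSemiring R] {s : ℕ}
    (T : MvPolynomial σ R →ₗ[R] MvPolynomial τ R)
    (hT : ∀ p d, p.IsHomogeneous d → (T p).IsHomogeneous (d + s)) (p : MvPolynomial σ R) (d : ℕ) :
    homogeneousComponent (d + s) (T p) = T (homogeneousComponent d p) := by
  have hcomp : ∀ i, homogeneousComponent (d + s) (T (homogeneousComponent i p)) =
      if i = d then T (homogeneousComponent i p) else 0 := fun i ↦ by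
    rw [homogeneousComponent_of_mem (hT _ _ (homogeneousComponent_isHomogeneous i p))]
    simp only [Nat.add_right_cancel_iff, eq_comm]
  conv_lhs => rw [← sum_homogeneousComponent p, map_sum, map_sum]
  rw [Finset.sum_congr rfl fun i _ ↦ hcomp i, Finset.sum_ite_eq']
  split_ifs with hd
  · rfl
  · rw [homogeneousComponent_eq_zero _ _ (by simpa using hd), map_zero]

variable {K : Type*} [Field K] {n d : ℕ} (c : Fin n → K)

theorem isHomogeneous_hyperplaneForm : (hyperplaneForm c).IsHomogeneous 1 :=
  (isHomogeneous_X _ _).sub (IsHomogeneous.sum _ _ _ fun _ _ ↦ isHomogeneous_C_mul_X _ _)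

theorem hyperplaneForm_ne_zero : hyperplaneForm c ≠ 0 := fun h ↦ by
  have hcoeff := congrArg (aeval (Fin.snoc (α := fun _ ↦ K) 0 1)) h
  simp [hyperplaneForm] at hcoeff

theorem isHomogeneous_restrict {p : MvPolynomial (Fin (n + 1)) K} (hp : p.IsHomogeneous d) :
    (restrict c p).IsHomogeneous d := by
  have hX : ∀ i, (Fin.snoc (α := fun _ ↦ MvPolynomial (Fin n) K) X (∑ i, C (c i) * X i)
      i).IsHomogeneous 1 := fun i ↦ by
    refine Fin.lastCases ?_ (fun j ↦ ?_) i
    · rw [Fin.snoc_last]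
      exact IsHomogeneous.sum _ _ _ fun _ _ ↦ isHomogeneous_C_mul_X _ _
    · rw [Fin.snoc_castSucc]
      exact isHomogeneous_X _ _
  rw [← one_mul d]
  exact hp.aeval _ hX

variable (p : MvPolynomial (Fin (n + 1)) K)

theorem homogeneousComponent_restrict :
    homogeneousComponent d (restrict c p) = restrict c (homogeneousComponent d p) :=
  homogeneousComponent_map (restrict c).toLinearMap (s := 0)
    (fun _ _ hp ↦ isHomogeneous_restrict c hp) p d

theorem homogeneousComponent_mul_hyperplaneForm :
    homogeneousComponent (d + 1) (p * hyperplaneForm c) =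
      homogeneousComponent d p * hyperplaneForm c :=
  homogeneousComponent_map (LinearMap.mulRight K (hyperplaneForm c))
    (fun _ _ hp ↦ hp.mul (isHomogeneous_hyperplaneForm c)) p d

variable {c p}

theorem isHomogeneous_of_mul_hyperplaneForm (hp : (p * hyperplaneForm c).IsHomogeneous (d + 1)) :
    p.IsHomogeneous d := by
  have hcomp := homogeneousComponent_mul_hyperplaneForm (d := d) c p
  rw [homogeneousComponent_eq_self hp] at hcomp
  rw [mul_right_cancel₀ (hyperplaneForm_ne_zero c) hcomp]
  exact homogeneousComponent_isHomogeneous d p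

theorem eq_zero_of_isHomogeneous_zero_of_restrict (hp : p.IsHomogeneous 0)
    (hres : restrict c p = 0) : p = 0 := by
  rw [totalDegree_eq_zero_iff_eq_C.1 ((totalDegree_zero_iff_isHomogeneous _).2 hp)] at hres ⊢
  simpa [← algebraMap_eq] using hres

end Homogeneous

section HilbertRecursion

variable {K : Type} [Field K] {n d : ℕ}

/-- The space of forms of degree `d` in `I`. -/
noncomputable abbrev gradedPiece (I : Ideal (MvPolynomial (Fin n) K)) (d : ℕ) :
    Submodule K (MvPolynomial (Fin n) K) :=
  I.restrictScalars K ⊓ homogeneousSubmodule (Fin n) K d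

/-- Every form in the restriction of `I` to the hyperplane lifts to a form in `I`. -/
def HasHomogeneousLifts (c : Fin n → K) (I : Ideal (MvPolynomial (Fin (n + 1)) K)) : Prop :=
  ∀ d, ∀ q ∈ I.map (restrict c), q.IsHomogeneous d → ∃ p ∈ I, p.IsHomogeneous d ∧ restrict c p = q

variable {c : Fin n → K} {I : Ideal (MvPolynomial (Fin (n + 1)) K)}

theorem hasHomogeneousLifts_of_isHomog (hI : IsHomog I) : HasHomogeneousLifts c I := by
  intro d q hq hd
  obtain ⟨p, hp, rfl⟩ := (Ideal.mem_map_iff_of_surjective _ (restrict_surjective c)).1 hq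
  refine ⟨homogeneousComponent d p, hI p hp d, homogeneousComponent_isHomogeneous d p, ?_⟩
  rw [← homogeneousComponent_restrict, homogeneousComponent_eq_self hd]

theorem map_restrict_gradedPiece (hI : HasHomogeneousLifts c I) :
    (gradedPiece I d).map (restrict c).toLinearMap = gradedPiece (I.map (restrict c)) d := by
  ext q
  constructor
  · rintro ⟨p, ⟨hp, hhom⟩, rfl⟩
    exact ⟨Ideal.mem_map_of_mem _ hp, isHomogeneous_restrict c hhom⟩
  · rintro ⟨hq, hhom⟩
    obtain ⟨p, hp, hphom, rfl⟩ := hI d q hq hhom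
    exact ⟨p, ⟨hp, hphom⟩, rfl⟩

theorem gradedPiece_zero_inf_ker_restrict :
    gradedPiece I 0 ⊓ LinearMap.ker (restrict c).toLinearMap = ⊥ :=
  (Submodule.eq_bot_iff _).2 fun _ ⟨hp, hker⟩ ↦
    eq_zero_of_isHomogeneous_zero_of_restrict hp.2 hker

theorem gradedPiece_succ_inf_ker_restrict :
    gradedPiece I (d + 1) ⊓ LinearMap.ker (restrict c).toLinearMap =
      (gradedPiece (I.colon {hyperplaneForm c}) d).map
        (LinearMap.mulRight K (hyperplaneForm c)) := by
  ext p
  constructor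
  · rintro ⟨⟨hp, hhom⟩, hker⟩
    obtain ⟨q, rfl⟩ := restrict_eq_zero_iff.1 hker
    rw [mul_comm] at hp hhom ⊢
    exact ⟨q, ⟨Submodule.mem_colon_singleton.2 hp, isHomogeneous_of_mul_hyperplaneForm hhom⟩, rfl⟩
  · rintro ⟨q, ⟨hq, hhom⟩, rfl⟩
    exact ⟨⟨Submodule.mem_colon_singleton.1 hq, hhom.mul (isHomogeneous_hyperplaneForm c)⟩,
      by simp⟩

theorem hilb_eq_add_finrank_ker (hI : HasHomogeneousLifts c I) :
    hilb I d = hilb (I.map (restrict c)) d +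
      Module.finrank K ↥(gradedPiece I d ⊓ LinearMap.ker (restrict c).toLinearMap) := by
  have : Module.Finite K (homogeneousSubmodule (Fin (n + 1)) K d) :=
    Module.Finite.of_fg (homogeneousSubmodule_fg (Fin (n + 1)) K d)
  have hrank := LinearMap.finrank_range_add_finrank_ker
    ((restrict c).toLinearMap.domRestrict (gradedPiece I d))
  rw [LinearMap.range_domRestrict, map_restrict_gradedPiece hI, LinearMap.ker_domRestrict] at hrank
  rw [← Submodule.map_comap_subtype, Submodule.finrank_map_subtype_eq]
  exact hrank.symm

theorem hilb_zero_eq (hI : HasHomogeneousLifts c I) : hilb I 0 = hilb (I.map (restrict c)) 0 := by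
  rw [hilb_eq_add_finrank_ker hI, gradedPiece_zero_inf_ker_restrict, finrank_bot, add_zero]

theorem hilb_succ_eq (hI : HasHomogeneousLifts c I) :
    hilb I (d + 1) = hilb (I.map (restrict c)) (d + 1) + hilb (I.colon {hyperplaneForm c}) d := by
  rw [hilb_eq_add_finrank_ker hI, gradedPiece_succ_inf_ker_restrict]
  congr 1
  exact (Submodule.equivMapOfInjective _
    (mul_left_injective₀ (hyperplaneForm_ne_zero c)) _).finrank_eq.symm

end HilbertRecursion

section CoefficientIdeals

/-- The ideal `⨁ⱼ Mⱼ tʲ` of polynomials with `j`-th coefficient in `Mⱼ`, where `M` is an increasing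
chain of ideals. -/
def coefficientIdeal {R : Type*} [CommSemiring R] (M : ℕ →o Ideal R) : Ideal (Polynomial R) where
  carrier := {p | ∀ j, p.coeff j ∈ M j}
  add_mem' hp hq j := by
    rw [Polynomial.coeff_add]
    exact add_mem (hp j) (hq j)
  zero_mem' j := by simp
  smul_mem' p q hq j := by
    rw [smul_eq_mul, Polynomial.coeff_mul]
    exact Ideal.sum_mem _ fun x hx ↦
      Ideal.mul_mem_left _ _ (M.monotone (Finset.HasAntidiagonal.antidiagonal.snd_le hx) (hq x.2))

variable {K : Type*} [Field K] {n : ℕ}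

variable (K n) in
/-- The identification of `K[x₀, …, xₙ]` with `K[x₀, …, xₙ₋₁][t]` that sends `xₙ` to `t`. -/
noncomputable def splitLast :
    MvPolynomial (Fin (n + 1)) K →ₐ[K] Polynomial (MvPolynomial (Fin n) K) :=
  aeval (Fin.snoc (α := fun _ ↦ Polynomial (MvPolynomial (Fin n) K))
    (Polynomial.C ∘ X) Polynomial.X)

@[simp]
theorem splitLast_rename (p : MvPolynomial (Fin n) K) :
    splitLast K n (rename Fin.castSucc p) = Polynomial.C p := by
  have hcomp : (splitLast K n).comp (rename Fin.castSucc) = Polynomial.CAlgHom :=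
    MvPolynomial.algHom_ext fun i ↦ by simp [splitLast]
  exact DFunLike.congr_fun hcomp p

@[simp]
theorem splitLast_hyperplaneForm_zero :
    splitLast K n (hyperplaneForm 0) = Polynomial.X := by
  simp [splitLast, hyperplaneForm]

theorem coeff_zero_splitLast (p : MvPolynomial (Fin (n + 1)) K) :
    (splitLast K n p).coeff 0 = restrict 0 p := by
  obtain ⟨q, hq⟩ := hyperplaneForm_dvd_sub_rename 0 p
  rw [eq_add_of_sub_eq hq]
  simp [restrict_rename]

/-- The ideal `⨁ⱼ Mⱼ xₙʲ` of `K[x₀, …, xₙ]`, where `M` is an increasing chain of ideals of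
`K[x₀, …, xₙ₋₁]`. -/
noncomputable def stack (M : ℕ →o Ideal (MvPolynomial (Fin n) K)) :
    Ideal (MvPolynomial (Fin (n + 1)) K) :=
  (coefficientIdeal M).comap (splitLast K n)

variable {M N : ℕ →o Ideal (MvPolynomial (Fin n) K)} {p : MvPolynomial (Fin (n + 1)) K}
  {q : MvPolynomial (Fin n) K}

theorem mem_stack : p ∈ stack M ↔ ∀ j, (splitLast K n p).coeff j ∈ M j :=
  Iff.rfl

theorem stack_mono (hMN : M ≤ N) : stack M ≤ stack N := fun _ hp j ↦ hMN j (hp j)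

theorem rename_mem_stack (hq : q ∈ M 0) : rename Fin.castSucc q ∈ stack M := fun j ↦ by
  rw [splitLast_rename, Polynomial.coeff_C]
  split_ifs with hj
  · rwa [hj]
  · exact zero_mem _

theorem map_restrict_stack : (stack M).map (restrict 0) = M 0 := by
  refine le_antisymm (Ideal.map_le_iff_le_comap.2 fun p hp ↦ ?_) fun q hq ↦ ?_
  · rw [Ideal.mem_comap, ← coeff_zero_splitLast]
    exact mem_stack.1 hp 0
  · rw [← restrict_rename 0 q]
    exact Ideal.mem_map_of_mem _ (rename_mem_stack hq)

theorem colon_stack (hMN : ∀ j, N j = M (j + 1)) :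
    (stack M).colon {hyperplaneForm 0} = stack N := by
  ext p
  rw [Submodule.mem_colon_singleton, mem_stack, mem_stack, smul_eq_mul, map_mul,
    splitLast_hyperplaneForm_zero]
  refine ⟨fun hp j ↦ ?_, fun hp j ↦ ?_⟩
  · rw [hMN]
    simpa only [Polynomial.coeff_mul_X] using hp (j + 1)
  · cases j with
    | zero => simp
    | succ j => rw [Polynomial.coeff_mul_X, ← hMN]; exact hp j

theorem hasHomogeneousLifts_stack {K : Type} [Field K]
    {M : ℕ →o Ideal (MvPolynomial (Fin n) K)} : HasHomogeneousLifts 0 (stack M) := by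
  intro d q hq hd
  rw [map_restrict_stack] at hq
  exact ⟨rename Fin.castSucc q, rename_mem_stack hq, hd.rename_isHomogeneous, restrict_rename 0 q⟩

end CoefficientIdeals

section MonotoneEGH

variable {K : Type} [Field K] {n r : ℕ} {a : Fin r → ℕ}

/-- The homogeneous ideals containing the family `f`, ordered by inclusion. -/
abbrev HomogIdealOver (f : Fin r → MvPolynomial (Fin n) K) : Type :=
  {I : Ideal (MvPolynomial (Fin n) K) // IsHomog I ∧ ∀ i, f i ∈ I}

/-- The strengthening of `EGHnr` in which the ideals containing the pure powers can be chosen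
monotonically for all homogeneous ideals containing a given regular sequence. It is this form that
passes from `n` to `n + 1` variables. -/
def MonotoneEGH (K : Type) [Field K] (n r : ℕ) (h : r ≤ n) (a : Fin r → ℕ) : Prop :=
  ∀ f : Fin r → MvPolynomial (Fin n) K, IsRegSeq f → (∀ i, (f i).IsHomogeneous (a i)) →
    ∃ Λ : HomogIdealOver f →o Ideal (MvPolynomial (Fin n) K),
      ∀ I, (∀ i, X (Fin.castLE h i) ^ a i ∈ Λ I) ∧ ∀ d, hilb (Λ I) d = hilb I.1 d

theorem MonotoneEGH.eghnr {h : r ≤ n} (H : MonotoneEGH K n r h a) : EGHnr K n r h a := by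
  rintro I hI ⟨f, hf, hdeg, hfI⟩
  obtain ⟨Λ, hΛ⟩ := H f hf hdeg
  obtain ⟨hpow, hhilb⟩ := hΛ ⟨I, hI, hfI⟩
  exact ⟨_, hpow, fun d ↦ (hhilb d).symm⟩

theorem hilb_span_lexPlusPowers {a : Fin n → ℕ} (ha : ∀ i, 0 < a i) (hmono : Monotone a)
    {J : Ideal (MvPolynomial (Fin n) K)} (hJ : ∀ i, X i ^ a i ∈ J) :
    hilb (Ideal.span ((fun u ↦ monomial u (1 : K)) '' lexPlusPowers a (hilb J))) = hilb J := by
  have hH : hilb J = fun d ↦ #(degreePart (leadingExponents MonomialOrder.lex J) d) :=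
    funext (hilb_eq_card _ J)
  have hpow := powerExponents_subset_leadingExponents (m := MonomialOrder.lex) hJ
  funext d
  rw [hilb_eq_card MonomialOrder.lex, hH, leadingExponents_span_monomial
    (isUpperSet_lexPlusPowers ha hmono isUpperSet_leadingExponents hpow),
    card_degreePart_lexPlusPowers ha hpow]

/-- The lex-plus-powers ideal with the Hilbert function of `I`, for `I` over `f`. -/
noncomputable def lexPlusPowersIdeal (a : Fin n → ℕ) (f : Fin r → MvPolynomial (Fin n) K) :
    HomogIdealOver f →o Ideal (MvPolynomial (Fin n) K) where
  toFun I := Ideal.span ((fun u ↦ monomial u (1 : K)) '' lexPlusPowers a (hilb I.1))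
  monotone' _ _ hIJ := Ideal.span_mono (Set.image_mono (lexPlusPowers_mono (hilb_mono hIJ)))

theorem monotoneEGH_of_eghnr {a : Fin n → ℕ} (ha : ∀ i, 0 < a i) (hmono : Monotone a)
    (hEGH : EGHnr K n n le_rfl a) : MonotoneEGH K n n le_rfl a := by
  refine fun f hf hdeg ↦ ⟨lexPlusPowersIdeal a f, fun I ↦ ⟨fun i ↦ ?_, fun d ↦ ?_⟩⟩
  · have hi : Finsupp.single i (a i) ∈ lexPlusPowers a (hilb I.1) :=
      mem_lexPlusPowers.2 (.inl ⟨i, by simp⟩)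
    rw [Fin.castLE_rfl, X_pow_eq_monomial]
    exact Ideal.subset_span (Set.mem_image_of_mem _ hi)
  · obtain ⟨J, hJ, hIJ⟩ := hEGH I.1 I.2.1 ⟨f, hf, hdeg, I.2.2⟩
    replace hIJ : hilb I.1 = hilb J := funext hIJ
    change hilb (Ideal.span ((fun u ↦ monomial u (1 : K)) '' lexPlusPowers a (hilb I.1))) d = _
    rw [hIJ, hilb_span_lexPlusPowers ha hmono hJ]

variable {f : Fin r → MvPolynomial (Fin (n + 1)) K} (c : Fin n → K)

/-- The colon operation `I ↦ I : hyperplaneForm c` on homogeneous ideals. -/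
noncomputable def HomogIdealOver.colonForm : HomogIdealOver f →o HomogIdealOver f where
  toFun I := ⟨I.1.colon {hyperplaneForm c}, fun p hp d ↦ by
      rw [Submodule.mem_colon_singleton, smul_eq_mul, ← homogeneousComponent_mul_hyperplaneForm]
      exact I.2.1 _ (Submodule.mem_colon_singleton.1 hp) _,
    fun i ↦ Ideal.le_colon (I.2.2 i)⟩
  monotone' _ _ hIJ := Submodule.colon_mono hIJ le_rfl

/-- The restriction of homogeneous ideals to the hyperplane `hyperplaneForm c = 0`. -/
noncomputable def HomogIdealOver.restrict :
    HomogIdealOver f →o HomogIdealOver (EGH.restrict c ∘ f) where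
  toFun I := ⟨I.1.map (EGH.restrict c), fun q hq d ↦ by
      obtain ⟨p, hp, rfl⟩ := (Ideal.mem_map_iff_of_surjective _ (restrict_surjective c)).1 hq
      rw [homogeneousComponent_restrict]
      exact Ideal.mem_map_of_mem _ (I.2.1 p hp d),
    fun i ↦ Ideal.mem_map_of_mem _ (I.2.2 i)⟩
  monotone' _ _ hIJ := Ideal.map_mono hIJ

variable {c} (Λ : HomogIdealOver (restrict c ∘ f) →o Ideal (MvPolynomial (Fin n) K))

/-- The chain of the ideals `Λ (restriction of I : hyperplaneForm c ^ j)` for `j : ℕ`. -/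
noncomputable def colonChain (I : HomogIdealOver f) : ℕ →o Ideal (MvPolynomial (Fin n) K) where
  toFun j := Λ (.restrict c ((HomogIdealOver.colonForm c)^[j] I))
  monotone' := monotone_nat_of_le_succ fun j ↦ by
    rw [Function.iterate_succ_apply']
    exact Λ.monotone ((HomogIdealOver.restrict c).monotone Ideal.le_colon)

/-- The extension of a monotone choice of ideals from the hyperplane to the whole space: by the
ideal `⨁ⱼ Λ (restriction of I : hyperplaneForm c ^ j) xₙʲ`. -/
noncomputable def stackColons : HomogIdealOver f →o Ideal (MvPolynomial (Fin (n + 1)) K) where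
  toFun I := stack (colonChain Λ I)
  monotone' _ _ hIJ := stack_mono fun j ↦ Λ.monotone
    ((HomogIdealOver.restrict c).monotone ((HomogIdealOver.colonForm c).monotone.iterate j hIJ))

variable {Λ}

theorem map_restrict_stackColons (I : HomogIdealOver f) :
    (stackColons Λ I).map (restrict 0) = Λ (.restrict c I) :=
  map_restrict_stack

theorem colon_stackColons (I : HomogIdealOver f) :
    (stackColons Λ I).colon {hyperplaneForm 0} = stackColons Λ (.colonForm c I) :=
  colon_stack fun _ ↦ rfl

theorem hilb_stackColons (hΛ : ∀ I d, hilb (Λ I) d = hilb I.1 d) (I : HomogIdealOver f) (d : ℕ) :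
    hilb (stackColons Λ I) d = hilb I.1 d := by
  have hlifts (I) : HasHomogeneousLifts 0 (stackColons Λ I) := hasHomogeneousLifts_stack
  have hIlifts (I : HomogIdealOver f) : HasHomogeneousLifts c I.1 :=
    hasHomogeneousLifts_of_isHomog I.2.1
  induction d generalizing I with
  | zero =>
    rw [hilb_zero_eq (hlifts I), hilb_zero_eq (hIlifts I), map_restrict_stackColons, hΛ]
    rfl
  | succ d ih =>
    rw [hilb_succ_eq (hlifts I), hilb_succ_eq (hIlifts I), map_restrict_stackColons, hΛ,
      colon_stackColons, ih]
    rfl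

theorem isRegSeq_iff_isRegularTo {n : ℕ} {f : Fin r → MvPolynomial (Fin n) K}
    (hf0 : ∀ i, constantCoeff (f i) = 0) : IsRegSeq f ↔ IsRegularTo f r := by
  refine ⟨fun hf i _ ↦ hf.2 i, fun hf ↦ ⟨fun htop ↦ ?_, fun i ↦ hf i i.2⟩⟩
  have hker : Ideal.span (Set.range f) ≤ RingHom.ker constantCoeff :=
    Ideal.span_le.2 (Set.range_subset_iff.2 hf0)
  exact RingHom.ker_ne_top _ (top_le_iff.1 (htop ▸ hker))

theorem exists_isRegSeq_restrict [Infinite K] (hrn : r ≤ n) (hf0 : ∀ i, constantCoeff (f i) = 0)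
    (hf : IsRegSeq f) : ∃ c : Fin n → K, IsRegSeq (restrict c ∘ f) := by
  have hreg := (isRegSeq_iff_isRegularTo hf0).1 hf
  obtain ⟨c, hc⟩ := exists_hyperplaneForm_regular_initialSpan fun k (hk : k ≤ r) ↦
    hasTrivialSocle_initialSpan hk (Nat.lt_succ_of_le (hk.trans hrn)) hf0 (hreg.mono hk)
  refine ⟨c, (isRegSeq_iff_isRegularTo fun i ↦ ?_).2 (isRegularTo_restrict hreg hc)⟩
  rw [Function.comp_apply, constantCoeff_restrict, hf0]

theorem MonotoneEGH.succ [Infinite K] (ha : ∀ i, 0 < a i) {h : r ≤ n}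
    (H : MonotoneEGH K n r h a) : MonotoneEGH K (n + 1) r (Nat.le_succ_of_le h) a := by
  intro f hf hdeg
  have hf0 : ∀ i, constantCoeff (f i) = 0 := fun i ↦
    (hdeg i).coeff_eq_zero (by simpa using (ha i).ne)
  obtain ⟨c, hc⟩ := exists_isRegSeq_restrict h hf0 hf
  obtain ⟨Λ, hΛ⟩ := H _ hc fun i ↦ isHomogeneous_restrict c (hdeg i)
  refine ⟨stackColons Λ, fun I ↦ ⟨fun i ↦ ?_, hilb_stackColons (fun J ↦ (hΛ J).2) I⟩⟩
  have hpow := rename_mem_stack (M := colonChain Λ I) ((hΛ (.restrict c I)).1 i)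
  rwa [map_pow, rename_X] at hpow

end MonotoneEGH

end EGH

/-- if `EGH_{a,r}` holds (in `r` variables), then for every `n ≥ r` the
statement `EGH_{n,a,r}` holds in `n` variables. -/
theorem stmt10 {K : Type} [Field K] [Infinite K] {r : ℕ} (a : Fin r → ℕ)
    (ha2 : ∀ i, 2 ≤ a i) (hmono : Monotone a)
    (hEGH : EGHnr K r r le_rfl a) :
    ∀ n : ℕ, ∀ h : r ≤ n, EGHnr K n r h a := by
  have ha : ∀ i, 0 < a i := fun i ↦ two_pos.trans_le (ha2 i)
  have hmonotone : ∀ n : ℕ, ∀ h : r ≤ n, EGH.MonotoneEGH K n r h a := fun n h ↦ by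
    induction n, h using Nat.le_induction with
    | base => exact EGH.monotoneEGH_of_eghnr ha hmono hEGH
    | succ n h ih => exact ih.succ ha
  exact fun n h ↦ (hmonotone n h).eghnr
end
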